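/- arXiv:2401.11309 — 2 statements merged into one kernel-verified Lean document; each statement's English description precedes it below -/
import Mathlib

section
/- Let p be a prime, let d ≥ 2 be an integer, let a be a nonzero rational number, and let b = σ·p^e with σ ∈ {1, −1} and e a nonnegative integer. Then the set PrePer(ψ_{d,a,b}, ℙ¹(ℚ)) of rational preperiodic points of ψ_{d,a,b} has at most 6 elements. -/
/-- The map `ψ_{d,a,b} : ℙ¹(ℚ) → ℙ¹(ℚ)`, with `ℙ¹(ℚ)` modeled as `Option ℚ`
(`some z` is the affine point `z`, and `none` is the point at infinity `[1 : 0]`).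
In homogeneous coordinates the map is `[X : Y] ↦ [X·Y^{d−1} : a·X^d + b·Y^d]`;
on the affine chart it is `z ↦ z / (a·z^d + b)`, the point at infinity mapping to `0`. -/
def psi (d : ℕ) (a b : ℚ) : Option ℚ → Option ℚ
  | none => some 0
  | some z => if a * z ^ d + b = 0 then none else some (z / (a * z ^ d + b))



lemma unit_of_dvd_pow {p : ℕ} (hp : p.Prime) {N : ℤ} {t : ℕ} {M : ℤ} (hM : M.natAbs = p ^ t)
    (hN : N ∣ M) (h : ¬ (p : ℤ) ∣ N) : N = 1 ∨ N = -1 := by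
  have h1 : N.natAbs ∣ p ^ t := by rw [← hM]; exact Int.natAbs_dvd_natAbs.mpr hN
  obtain ⟨k, hk, hk2⟩ := (Nat.dvd_prime_pow hp).1 h1
  rcases Nat.eq_zero_or_pos k with h0 | h0
  · subst h0
    simp at hk2
    omega
  · exfalso
    apply h
    rw [Int.natCast_dvd, hk2]
    exact dvd_pow_self p h0.ne'

lemma abs_pow_ge {y : ℤ} (hy : 2 ≤ |y|) {n k : ℕ} (hk : k ≤ n) : |y| ^ k ≤ |y ^ n| := by
  rw [abs_pow]
  exact pow_le_pow_right₀ (by omega) hk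

lemma int_key_N1 {p : ℕ} (hp : p.Prime) {b x y : ℤ} {e d : ℕ} (hd : 2 ≤ d) (hb : b.natAbs = p ^ e)
    (hxy : IsCoprime x y) (hx0 : x ≠ 0) (hy0 : y ≠ 0)
    (h : b * x ^ d + x * y ^ (d - 1) = b * y ^ d) : False := by
  have hb0 : b ≠ 0 := by
    rintro rfl
    have := pow_pos hp.pos e
    simp at hb; omega
  obtain ⟨n, rfl⟩ : ∃ n, d = n + 1 := ⟨d - 1, by omega⟩
  simp only [Nat.add_sub_cancel] at h
  have hn : 1 ≤ n := by omega
  have hxb : x ∣ b := by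
    have : x ∣ b * y ^ (n + 1) := by
      rw [← h]; exact Dvd.intro (b * x ^ n + y ^ n) (by ring)
    exact (hxy.pow_right).dvd_of_dvd_mul_right this
  obtain ⟨c, rfl⟩ := hxb
  have h2 : c * x ^ (n + 1) + y ^ n = c * y ^ (n + 1) := by
    apply mul_left_cancel₀ hx0
    linear_combination h
  have hyc : y ^ n ∣ c := by
    have : y ^ n ∣ c * x ^ (n + 1) := Dvd.intro (c * y - 1) (by linear_combination -h2)
    exact (IsCoprime.pow hxy.symm).dvd_of_dvd_mul_right this
  obtain ⟨s, rfl⟩ := hyc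
  have h3 : s * (y ^ (n + 1) - x ^ (n + 1)) = 1 := by
    apply mul_left_cancel₀ (pow_ne_zero n hy0)
    linear_combination -h2
  have h4 : y ^ (n + 1) - x ^ (n + 1) = 1 ∨ y ^ (n + 1) - x ^ (n + 1) = -1 :=
    Int.isUnit_iff.1 (IsUnit.of_mul_eq_one s (by rw [mul_comm]; exact h3))
  have h5 : (x = 1 ∨ x = -1) ∨ (y = 1 ∨ y = -1) := by
    by_cases hpx : (p : ℤ) ∣ x
    · right
      apply unit_of_dvd_pow hp hb
      · exact (dvd_mul_of_dvd_left (dvd_pow_self y (by omega)) s).mul_left x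
      · intro hpy
        have := hxy.isUnit_of_dvd' hpx hpy
        exact (Nat.prime_iff_prime_int.1 hp).not_isUnit this
    · left
      exact unit_of_dvd_pow hp hb (dvd_mul_right _ _) hpx
  have key : ∀ u v : ℤ, v ≠ 0 → (u = 1 ∨ u = -1) →
      (v ^ (n + 1) - u ^ (n + 1) = 1 ∨ v ^ (n + 1) - u ^ (n + 1) = -1) → False := by
    intro u v hv hu hh
    have hu1 : u ^ (n + 1) = 1 ∨ u ^ (n + 1) = -1 := by
      rcases hu with rfl | rfl
      · simp
      · exact neg_one_pow_eq_or ℤ (n + 1)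
    have hv1 : v ^ (n + 1) ≠ 0 := pow_ne_zero _ hv
    by_cases hv2 : 2 ≤ |v|
    · have := abs_pow_ge hv2 (show 2 ≤ n + 1 by omega)
      have h4 : 4 ≤ |v| ^ 2 := by nlinarith
      have : 4 ≤ |v ^ (n + 1)| := h4.trans this
      rcases abs_cases (v ^ (n + 1)) with ⟨h, _⟩ | ⟨h, _⟩ <;> omega
    · have : v = 1 ∨ v = -1 := by
        rcases abs_cases v with ⟨h, _⟩ | ⟨h, _⟩ <;> omega
      have : v ^ (n + 1) = 1 ∨ v ^ (n + 1) = -1 := by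
        rcases this with rfl | rfl
        · simp
        · exact neg_one_pow_eq_or ℤ (n + 1)
      omega
  rcases h5 with h5 | h5
  · exact key x y hy0 h5 h4
  · exact key y x hx0 h5 (by omega)

lemma int_key_N2 {p : ℕ} (hp : p.Prime) {b x y : ℤ} {e d : ℕ} (hd : 3 ≤ d) (hb : b.natAbs = p ^ e)
    (hb1 : b ≠ 1) (hxy : IsCoprime x y) (hx0 : x ≠ 0) (hy0 : y ≠ 0)
    (h : y ^ (d - 1) * (x - b * y) = (1 - b) * x ^ d) : x = y := by
  have hb0 : b ≠ 0 := by
    rintro rfl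
    have := pow_pos hp.pos e
    simp at hb; omega
  obtain ⟨n, rfl⟩ : ∃ n, d = n + 1 := ⟨d - 1, by omega⟩
  simp only [Nat.add_sub_cancel] at h
  have hn : 2 ≤ n := by omega
  have hBabs : 1 ≤ |b| := Int.one_le_abs hb0
  have case1 : ∀ y : ℤ, y ≠ 0 → y ^ n * (1 - b * y) = 1 - b → y = 1 := by
    intro y hy h
    by_cases hv2 : 2 ≤ |y|
    · exfalso
      have h1 := abs_pow_ge hv2 hn
      have h4 : 4 ≤ |y ^ n| := by nlinarith
      have h5 : |y ^ n| * |1 - b * y| = |1 - b| := by rw [← abs_mul, h]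
      have h6 : |b| * |y| - 1 ≤ |1 - b * y| := by
        rw [← abs_mul]
        have := abs_sub_abs_le_abs_sub (b * y) 1
        rw [abs_sub_comm]; simpa using this
      have h7 : |1 - b| ≤ 1 + |b| := by
        have := abs_sub 1 b; simpa using this
      have h8 : |b| ≤ |1 - b * y| := by nlinarith
      nlinarith
    · have : y = 1 ∨ y = -1 := by
        rcases abs_cases y with ⟨h, _⟩ | ⟨h, _⟩ <;> omega
      rcases this with h1 | rfl
      · exact h1
      · exfalso
        rcases neg_one_pow_eq_or ℤ n with h2 | h2 <;> rw [h2] at h <;> omega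
  have case2 : ∀ y : ℤ, y ≠ 0 → IsCoprime b y → y ^ n * (1 - y) = (1 - b) * b ^ n → y = b := by
    intro y hy hc h
    have h1 : y ^ n ∣ 1 - b := by
      have : y ^ n ∣ (1 - b) * b ^ n := Dvd.intro _ h
      exact (IsCoprime.pow hc.symm).dvd_of_dvd_mul_right this
    have h2 : b ^ n ∣ 1 - y := by
      have : b ^ n ∣ y ^ n * (1 - y) := Dvd.intro_left _ h.symm
      exact (IsCoprime.pow hc).dvd_of_dvd_mul_left this
    have hb1' : 1 - b ≠ 0 := by omega
    have hy1' : 1 - y ≠ 0 := by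
      intro h0
      rw [h0, mul_zero] at h
      rcases mul_eq_zero.1 h.symm with h | h
      · exact hb1' h
      · exact pow_ne_zero n hb0 h
    have h3 : |y ^ n| ≤ |1 - b| := Int.le_of_dvd (by positivity) ((abs_dvd_abs _ _).2 h1)
    have h4 : |b ^ n| ≤ |1 - y| := Int.le_of_dvd (by positivity) ((abs_dvd_abs _ _).2 h2)
    have hY : 1 ≤ |y| := Int.one_le_abs hy
    have h5 : |y| ^ 2 ≤ |y ^ n| := by rw [abs_pow]; exact pow_le_pow_right₀ hY hn
    have h6 : |b| ^ 2 ≤ |b ^ n| := by rw [abs_pow]; exact pow_le_pow_right₀ hBabs hn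
    have h7 : |1 - b| ≤ 1 + |b| := by
      have := abs_sub 1 b; simpa using this
    have h8 : |1 - y| ≤ 1 + |y| := by
      have := abs_sub 1 y; simpa using this
    have h9 : |y| ≤ 1 := by nlinarith
    have h10 : |b| ≤ 1 := by nlinarith
    rcases abs_cases y with ⟨h, _⟩ | ⟨h, _⟩ <;> rcases abs_cases b with ⟨h, _⟩ | ⟨h, _⟩ <;> omega
  have hxb : x ∣ b := by
    have : x ∣ b * y ^ (n + 1) := Dvd.intro (y ^ n - (1 - b) * x ^ n) (by linear_combination h)
    exact (hxy.pow_right).dvd_of_dvd_mul_right this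
  obtain ⟨c, hc⟩ := hxb
  have h2 : y ^ n * (1 - c * y) = (1 - b) * x ^ n := by
    apply mul_left_cancel₀ hx0
    linear_combination h + y ^ (n + 1) * hc
  have hP := Nat.prime_iff_prime_int.1 hp
  have h5 : (x = 1 ∨ x = -1) ∨ (c = 1 ∨ c = -1) := by
    by_cases hpx : (p : ℤ) ∣ x
    · right
      apply unit_of_dvd_pow hp hb (hc ▸ dvd_mul_left _ _)
      intro hpc
      have : (p : ℤ) ∣ y ^ n * (1 - c * y) := by
        rw [h2]; exact (dvd_pow hpx (by omega)).mul_left _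
      rcases hP.dvd_or_dvd this with h | h
      · exact hP.not_isUnit (hxy.isUnit_of_dvd' hpx (hP.dvd_of_dvd_pow h))
      · have : (p : ℤ) ∣ 1 := by
          have := dvd_add h (hpc.mul_right y)
          simpa using this
        exact hP.not_isUnit (isUnit_of_dvd_one this)
    · left
      exact unit_of_dvd_pow hp hb (hc ▸ dvd_mul_right _ _) hpx
  rcases h5 with (rfl | rfl) | (rfl | rfl)
  · have := case1 y hy0 (by linear_combination h)
    exact this.symm
  · have := case1 (-y) (by omega) (by
      rcases neg_one_pow_eq_or ℤ n with h2 | h2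
      · rw [neg_pow y n, h2]; rw [pow_succ, h2] at h; linear_combination -h
      · rw [neg_pow y n, h2]; rw [pow_succ, h2] at h; linear_combination h)
    omega
  · obtain rfl : b = x := by linarith
    have := case2 y hy0 hxy (by linear_combination h2)
    exact this.symm
  · obtain rfl : x = -b := by linarith
    have := case2 (-y) (by omega) (by simpa using hxy.neg_left.neg_right) (by
      rw [neg_pow b n] at h2
      rcases neg_one_pow_eq_or ℤ n with h3 | h3
      · rw [neg_pow y n, h3]; rw [h3] at h2; linear_combination h2
      · rw [neg_pow y n, h3]; rw [h3] at h2; linear_combination -h2)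
    omega

lemma int_key_N3 {p : ℕ} (hp : p.Prime) {b x y : ℤ} {e : ℕ} (hb : b.natAbs = p ^ e)
    (hb1 : b ≠ 1) (hxy : IsCoprime x y) (hx0 : x ≠ 0) (hy0 : y ≠ 0)
    (h : b ^ 3 * x ^ 2 = (1 - b) * (y * (x - y))) : False := by
  have hb0 : b ≠ 0 := by
    rintro rfl
    have := pow_pos hp.pos e
    simp at hb; omega
  have hBabs : 1 ≤ |b| := Int.one_le_abs hb0
  have hb1' : 1 - b ≠ 0 := by omega
  have hc2 : IsCoprime x (x - y) := by
    obtain ⟨s, t, hst⟩ := hxy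
    exact ⟨s + t, -t, by linear_combination hst⟩
  have hc3 : IsCoprime y (x - y) := by
    obtain ⟨s, t, hst⟩ := hxy
    exact ⟨s + t, s, by linear_combination hst⟩
  have hcb : IsCoprime (1 - b) b := ⟨1, 1, by ring⟩
  have h1 : x ^ 2 ∣ 1 - b := by
    have : x ^ 2 ∣ (1 - b) * (y * (x - y)) := Dvd.intro_left _ h
    exact ((hxy.mul_right hc2).pow_left).dvd_of_dvd_mul_right this
  have hw : y * (x - y) ∣ b ^ 3 := by
    have : y * (x - y) ∣ b ^ 3 * x ^ 2 := Dvd.intro_left _ h.symm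
    exact ((hxy.mul_right hc2).symm.pow_right).dvd_of_dvd_mul_right this
  have hw2 : b ^ 3 ∣ y * (x - y) := by
    have : b ^ 3 ∣ (1 - b) * (y * (x - y)) := Dvd.intro _ h
    exact (hcb.symm.pow_left).dvd_of_dvd_mul_left this
  have hb3 : (b ^ 3).natAbs = p ^ (e * 3) := by rw [Int.natAbs_pow, hb, pow_mul]
  have hP := Nat.prime_iff_prime_int.1 hp
  have h5 : (y = 1 ∨ y = -1) ∨ (x - y = 1 ∨ x - y = -1) := by
    by_cases hpx : (p : ℤ) ∣ y
    · right
      apply unit_of_dvd_pow hp hb3 ((dvd_mul_left _ _).trans hw)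
      intro hpc
      exact hP.not_isUnit (hc3.isUnit_of_dvd' hpx hpc)
    · left
      exact unit_of_dvd_pow hp hb3 ((dvd_mul_right _ _).trans hw) hpx
  have hxy0 : x - y ≠ 0 := by
    intro h0
    rw [h0] at h
    simp at h
    tauto
  have h6 : |b ^ 3| ≤ |y * (x - y)| :=
    Int.le_of_dvd (abs_pos.2 (mul_ne_zero hy0 hxy0)) ((abs_dvd_abs _ _).2 hw2)
  have h7 : |x ^ 2| ≤ |1 - b| := Int.le_of_dvd (by positivity) ((abs_dvd_abs _ _).2 h1)
  have h8 : |1 - b| ≤ 1 + |b| := by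
    have := abs_sub 1 b; simpa using this
  have h9 : |b| ^ 3 ≤ |x| + 1 := by
    rw [← abs_pow]
    refine h6.trans ?_
    rw [abs_mul]
    rcases h5 with (rfl | rfl) | (h | h)
    · have := abs_sub x 1; simpa using this
    · have := abs_add_le x 1; simpa using this
    · have : y = x - 1 := by omega
      rw [h, this]; have := abs_sub x 1; simpa using this
    · have : y = x + 1 := by omega
      rw [h, this]; have := abs_add_le x 1; simpa using this
  rw [abs_pow] at h7
  have hX : 1 ≤ |x| := Int.one_le_abs hx0
  by_cases hB : 2 ≤ |b|
  · have : 4 * |b| ≤ |b| ^ 3 := by nlinarith [mul_le_mul hB hB (by norm_num) (by positivity)]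
    nlinarith
  · obtain rfl : b = -1 := by rcases abs_cases b with ⟨h, _⟩ | ⟨h, _⟩ <;> omega
    have h10 : |x| ≤ 1 := by
      have h2 : |(1 : ℤ) - -1| = 2 := by norm_num
      rw [h2] at h7
      nlinarith
    have : x = 1 ∨ x = -1 := by
      rcases abs_cases x with ⟨h, _⟩ | ⟨h, _⟩ <;> omega
    rcases this with rfl | rfl <;> norm_num at h <;> omega

lemma rat_N1 {p : ℕ} (hp : p.Prime) {b : ℤ} {e d : ℕ} (hd : 2 ≤ d) (hb : b.natAbs = p ^ e)
    (r : ℚ) (h : r - b = -b * r ^ d) : False := by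
  have hb0 : b ≠ 0 := by
    rintro rfl
    have := pow_pos hp.pos e
    simp at hb; omega
  have hr0 : r ≠ 0 := by
    rintro rfl
    rw [zero_pow (by omega)] at h
    simp at h; exact hb0 h
  have hden : (r.den : ℚ) ≠ 0 := by exact_mod_cast r.den_nz
  apply int_key_N1 hp hd hb (Rat.isCoprime_num_den r) (Rat.num_ne_zero.2 hr0)
    (by exact_mod_cast r.den_nz)
  obtain ⟨n, rfl⟩ : ∃ n, d = n + 1 := ⟨d - 1, by omega⟩
  simp only [Nat.add_sub_cancel]
  have hq : (r.num : ℚ) = r * r.den := (Rat.mul_den_eq_num r).symm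
  have : (b : ℚ) * r.num ^ (n + 1) + r.num * (r.den : ℚ) ^ n = b * (r.den : ℚ) ^ (n + 1) := by
    rw [hq, mul_pow]
    linear_combination (r.den : ℚ) ^ (n + 1) * h
  exact_mod_cast this

lemma rat_N2 {p : ℕ} (hp : p.Prime) {b : ℤ} {e d : ℕ} (hd : 2 ≤ d) (hb : b.natAbs = p ^ e)
    (hb1 : b ≠ 1) (r : ℚ) (h : r - b = (1 - b) * r ^ d) :
    r = 1 ∨ (d = 2 ∧ r = b / (1 - b)) := by
  have hb0 : b ≠ 0 := by
    rintro rfl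
    have := pow_pos hp.pos e
    simp at hb; omega
  have hr0 : r ≠ 0 := by
    rintro rfl
    rw [zero_pow (by omega)] at h
    simp at h; exact hb0 h
  have hb1' : (1 - b : ℚ) ≠ 0 := by
    intro h0
    apply hb1
    have : (b : ℚ) = 1 := by linarith
    exact_mod_cast this
  rcases Nat.lt_or_ge 2 d with hd3 | hd3
  · left
    have hden : (r.den : ℚ) ≠ 0 := by exact_mod_cast r.den_nz
    have key : r.num = r.den := by
      apply int_key_N2 hp hd3 hb hb1 (Rat.isCoprime_num_den r) (Rat.num_ne_zero.2 hr0)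
        (by exact_mod_cast r.den_nz)
      obtain ⟨n, rfl⟩ : ∃ n, d = n + 1 := ⟨d - 1, by omega⟩
      simp only [Nat.add_sub_cancel]
      have hq : (r.num : ℚ) = r * r.den := (Rat.mul_den_eq_num r).symm
      have : (r.den : ℚ) ^ n * (r.num - b * r.den) = (1 - b) * (r.num : ℚ) ^ (n + 1) := by
        rw [hq, mul_pow]
        linear_combination (r.den : ℚ) ^ (n + 1) * h
      exact_mod_cast this
    rw [← Rat.num_div_den r, key]
    exact div_self hden
  · obtain rfl : d = 2 := by omega
    have : (r - 1) * ((1 - b) * r - b) = 0 := by linear_combination -h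
    rcases mul_eq_zero.1 this with h | h
    · left; linarith
    · right
      refine ⟨rfl, ?_⟩
      field_simp
      linarith

lemma rat_N3 {p : ℕ} (hp : p.Prime) {b : ℤ} {e : ℕ} (hb : b.natAbs = p ^ e)
    (hb1 : b ≠ 1) (r : ℚ) (h : r - b = b ^ 2 / (1 - b) * r ^ 2) : False := by
  have hb0 : b ≠ 0 := by
    rintro rfl
    have := pow_pos hp.pos e
    simp at hb; omega
  have hb0' : (b : ℚ) ≠ 0 := by exact_mod_cast hb0
  have hr0 : r ≠ 0 := by
    rintro rfl
    simp at h; exact hb0 h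
  have hb1' : (1 - b : ℚ) ≠ 0 := by
    intro h0
    apply hb1
    have : (b : ℚ) = 1 := by linarith
    exact_mod_cast this
  obtain ⟨s, rfl⟩ : ∃ s, r = b * s := ⟨r / b, by field_simp⟩
  have hs0 : s ≠ 0 := right_ne_zero_of_mul hr0
  have h2 : (b : ℚ) ^ 3 * s ^ 2 = (1 - b) * (s - 1) := by
    have := congrArg (fun t => (1 - b : ℚ) * t) h
    field_simp at this
    exact this.symm
  have hden : (s.den : ℚ) ≠ 0 := by exact_mod_cast s.den_nz
  apply int_key_N3 hp hb hb1 (Rat.isCoprime_num_den s) (Rat.num_ne_zero.2 hs0)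
    (by exact_mod_cast s.den_nz)
  have hq : (s.num : ℚ) = s * s.den := (Rat.mul_den_eq_num s).symm
  have : (b : ℚ) ^ 3 * s.num ^ 2 = (1 - b) * (s.den * (s.num - s.den)) := by
    rw [hq]
    linear_combination (s.den : ℚ) ^ 2 * h2
  exact_mod_cast this

/-- The induced map on `u = a z ^ d`. -/
def gmap (d : ℕ) (b u : ℚ) : ℚ := u / (b + u) ^ d

/-- The finite list of possible values. -/
def QQ (d : ℕ) (b u : ℚ) : Prop :=
  u = 0 ∨ u = -b ∨ u = 1 - b ∨ (Even d ∧ u = -1 - b) ∨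
    (d = 2 ∧ b ≠ 1 ∧ u = b ^ 2 / (1 - b)) ∨ (d = 2 ∧ b ≠ -1 ∧ u = -(b ^ 2 / (1 + b)))

lemma QQ_back {p : ℕ} (hp : p.Prime) {b : ℤ} {e d : ℕ} (hd : 2 ≤ d) (hb : b.natAbs = p ^ e)
    (u : ℚ) (h : QQ d b (gmap d b u)) : QQ d b u := by
  have hb' : (-b).natAbs = p ^ e := by rw [Int.natAbs_neg, hb]
  by_cases hr : (b : ℚ) + u = 0
  · right; left; linarith
  by_cases hu : u = 0
  · left; exact hu
  have hrd : ((b : ℚ) + u) ^ d ≠ 0 := pow_ne_zero _ hr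
  have hg0 : gmap d b u ≠ 0 := div_ne_zero hu hrd
  have hgu : ((b : ℚ) + u) - b = gmap d b u * (b + u) ^ d := by
    unfold gmap; field_simp; ring
  set r : ℚ := b + u with hrdef
  have hur : u = r - b := by rw [hrdef]; ring
  rcases h with h | h | h | ⟨hev, h⟩ | ⟨hd2, hb1, h⟩ | ⟨hd2, hb1, h⟩
  · exact absurd h hg0
  · rw [h] at hgu
    exact (rat_N1 hp hd hb r hgu).elim
  · rw [h] at hgu
    have hb1 : b ≠ 1 := by
      rintro rfl
      apply hg0; rw [h]; norm_num
    have hb1q : (b : ℚ) ≠ 1 := by exact_mod_cast hb1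
    have hb1' : (1 - b : ℚ) ≠ 0 := fun h0 => hb1q (by linarith)
    rcases rat_N2 hp hd hb hb1 r hgu with h1 | ⟨h1, h2⟩
    · right; right; left; rw [hur, h1]
    · right; right; right; right; left
      refine ⟨h1, hb1q, ?_⟩
      rw [hur, h2]; field_simp; ring
  · rw [h] at hgu
    have hb1 : -b ≠ 1 := by
      intro h1
      obtain rfl : b = -1 := by omega
      apply hg0; rw [h]; norm_num
    have hb1q : (b : ℚ) ≠ -1 := by
      intro h0
      have : b = -1 := by exact_mod_cast h0
      omega
    have hb1' : (1 + b : ℚ) ≠ 0 := fun h0 => hb1q (by linarith)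
    have := rat_N2 hp hd hb' hb1 (-r) (by
      rw [hev.neg_pow]; push_cast; linear_combination -hgu)
    rcases this with h1 | ⟨h1, h2⟩
    · right; right; right; left; refine ⟨hev, ?_⟩; rw [hur]; linarith
    · right; right; right; right; right
      refine ⟨h1, hb1q, ?_⟩
      push_cast at h2
      rw [sub_neg_eq_add, neg_div] at h2
      have h3 : r = b / (1 + b) := by linarith
      rw [hur, h3]; field_simp; ring
  · rw [h] at hgu
    subst hd2
    exact (rat_N3 hp hb (by exact_mod_cast hb1) r hgu).elim
  · rw [h] at hgu
    subst hd2
    exfalso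
    refine rat_N3 hp hb' (fun h0 => hb1 ?_) (-r) ?_
    · have : b = -1 := by omega
      exact_mod_cast this
    · push_cast
      rw [sub_neg_eq_add, sub_neg_eq_add]
      linear_combination -hgu

lemma back {α : Type*} {g : α → α} {u : α} {N : ℕ} (hN : 0 < N) (h : g^[N] u = u) (A : α → Prop)
    (hA : ∀ x, A x → A (g x)) (k : ℕ) (hk : A (g^[k] u)) : A u := by
  have h1 : ∀ m x, A x → A (g^[m] x) := by
    intro m
    induction m with
    | zero => intro x hx; exact hx
    | succ m ih => intro x hx; rw [Function.iterate_succ_apply]; exact ih _ (hA _ hx)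
  have h2 : g^[N * k] u = u := Function.IsPeriodicPt.mul_const (f := g) (m := N) h k
  have h3 := h1 (N * k - k) _ hk
  rw [← Function.iterate_add_apply, Nat.sub_add_cancel (Nat.le_mul_of_pos_left k hN), h2] at h3
  exact h3

lemma per_step {α : Type*} {g : α → α} {u : α} {N : ℕ} (h : g^[N] u = u) : g^[N] (g u) = g u := by
  rw [← Function.iterate_succ_apply, Function.iterate_succ_apply', h]

lemma rat_unit {q : ℚ} (hq : q ≠ 0) (h : ∀ l : ℕ, l.Prime → padicValRat l q = 0) :
    q = 1 ∨ q = -1 := by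
  have hnum : q.num ≠ 0 := Rat.num_ne_zero.2 hq
  have key : ∀ l : ℕ, l.Prime → ¬ l ∣ q.num.natAbs ∧ ¬ l ∣ q.den := by
    intro l hl
    have := Fact.mk hl
    have h1 := h l hl
    rw [padicValRat] at h1
    have hcop := q.reduced
    have h3 : l ∣ q.num.natAbs → 1 ≤ padicValInt l q.num := by
      intro hd
      exact one_le_padicValNat_of_dvd (by simpa using hnum) hd
    have h4 : l ∣ q.den → 1 ≤ padicValNat l q.den := by
      intro hd
      exact one_le_padicValNat_of_dvd q.den_nz hd
    have h5 : ¬ (l ∣ q.num.natAbs ∧ l ∣ q.den) := fun hh =>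
      Nat.not_coprime_of_dvd_of_dvd hl.one_lt hh.1 hh.2 hcop
    have h6 : ¬ l ∣ q.num.natAbs → padicValInt l q.num = 0 := fun hh =>
      padicValNat.eq_zero_of_not_dvd hh
    have h7 : ¬ l ∣ q.den → padicValNat l q.den = 0 := fun hh =>
      padicValNat.eq_zero_of_not_dvd hh
    by_cases ha : l ∣ q.num.natAbs <;> by_cases hb : l ∣ q.den
    · exact absurd ⟨ha, hb⟩ h5
    · have := h3 ha; have := h7 hb; omega
    · have := h6 ha; have := h4 hb; omega
    · exact ⟨ha, hb⟩
  have hd : q.den = 1 := by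
    by_contra hne
    obtain ⟨l, hl, hdv⟩ := Nat.exists_prime_and_dvd hne
    exact (key l hl).2 hdv
  have hn : q.num.natAbs = 1 := by
    by_contra hne
    obtain ⟨l, hl, hdv⟩ := Nat.exists_prime_and_dvd hne
    exact (key l hl).1 hdv
  have hq2 : (q.num : ℚ) = q := Rat.coe_int_num_of_den_eq_one hd
  rcases Int.natAbs_eq_iff.1 hn with h | h
  · left; rw [← hq2, h]; norm_num
  · right; rw [← hq2, h]; norm_num

lemma rat_ppow {p : ℕ} (hp : p.Prime) {q : ℚ} (hq : q ≠ 0)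
    (h : ∀ l : ℕ, l.Prime → l ≠ p → padicValRat l q = 0) :
    q = (p : ℚ) ^ (padicValRat p q) ∨ q = -(p : ℚ) ^ (padicValRat p q) := by
  have hp0 : (p : ℚ) ≠ 0 := by exact_mod_cast hp.ne_zero
  set k := padicValRat p q with hk
  have hpk : (p : ℚ) ^ k ≠ 0 := zpow_ne_zero _ hp0
  have := rat_unit (q := q / (p : ℚ) ^ k) (div_ne_zero hq hpk) (by
    intro l hl
    have := Fact.mk hl
    have := Fact.mk hp
    rw [padicValRat.div hq hpk, padicValRat.zpow]
    by_cases hlp : l = p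
    · subst hlp
      rw [padicValRat.self hp.one_lt]; omega
    · rw [h l hl hlp, padicValRat.of_nat, padicValNat_primes hlp]; simp)
  rcases this with h | h
  · left; field_simp at h; exact h
  · right; field_simp at h; linarith

lemma gmap_ne {d : ℕ} (hd : 2 ≤ d) {b u : ℚ} {N : ℕ} (hN : 0 < N) (h : (gmap d b)^[N] u = u)
    (hu : u ≠ 0) : gmap d b u ≠ 0 ∧ b + u ≠ 0 := by
  have h1 : gmap d b u ≠ 0 := by
    intro h0
    apply hu
    exact back hN h (fun x => x = 0) (by intro x hx; simp [gmap, hx]) 1 h0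
  refine ⟨h1, fun h0 => h1 ?_⟩
  rw [gmap, h0, zero_pow (by omega), div_zero]

lemma gmap_val {l : ℕ} (hl : l.Prime) {d : ℕ} {b u : ℚ} (hu : u ≠ 0) (hr : b + u ≠ 0) :
    padicValRat l (gmap d b u) = padicValRat l u - d * padicValRat l (b + u) := by
  have := Fact.mk hl
  rw [gmap, padicValRat.div hu (pow_ne_zero _ hr), padicValRat.pow]

lemma val_zero {l : ℕ} (hl : l.Prime) {d : ℕ} (hd : 2 ≤ d) {b u : ℚ} (hb0 : b ≠ 0)
    (hb : padicValRat l b = 0) {N : ℕ} (hN : 0 < N) (h : (gmap d b)^[N] u = u)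
    (hu : u ≠ 0) : padicValRat l (b + u) = 0 := by
  have := Fact.mk hl
  have hd' : (2 : ℤ) ≤ d := by exact_mod_cast hd
  obtain ⟨hg, hr⟩ := gmap_ne hd hN h hu
  obtain ⟨hg', hr'⟩ := gmap_ne hd hN (per_step h) hg
  have hpos : ∀ x : ℚ, x ≠ 0 → 0 < padicValRat l x → b + x ≠ 0 ∧ padicValRat l (b + x) = 0 := by
    intro x hx hv
    have h1 : b + x ≠ 0 := by
      intro h0
      have : x = -b := by linarith
      rw [this, padicValRat.neg, hb] at hv
      omega
    exact ⟨h1, by rw [padicValRat.add_eq_of_lt h1 hb0 hx (by omega), hb]⟩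
  have hneg : ∀ x : ℚ, x ≠ 0 → b + x ≠ 0 → padicValRat l x < 0 →
      padicValRat l (b + x) = padicValRat l x := by
    intro x hx h1 hv
    rw [add_comm, padicValRat.add_eq_of_lt (by rwa [add_comm]) hx hb0 (by omega)]
  have hinv : ∀ x : ℚ, (x ≠ 0 ∧ 0 < padicValRat l x) →
      (gmap d b x ≠ 0 ∧ 0 < padicValRat l (gmap d b x)) := by
    rintro x ⟨hx, hv⟩
    obtain ⟨h1, h2⟩ := hpos x hx hv
    refine ⟨div_ne_zero hx (pow_ne_zero _ h1), ?_⟩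
    rw [gmap_val hl hx h1, h2]; simpa using hv
  have hnegstep : ∀ x : ℚ, x ≠ 0 → b + x ≠ 0 → padicValRat l x < 0 →
      0 < padicValRat l (gmap d b x) := by
    intro x hx h1 hv
    rw [gmap_val hl hx h1, hneg x hx h1 hv]
    nlinarith
  rcases lt_trichotomy (padicValRat l u) 0 with hv | hv | hv
  · have := back hN h _ hinv 1 ⟨hg, hnegstep u hu hr hv⟩
    omega
  · by_contra hne
    have h1 : 0 ≤ padicValRat l (b + u) := by
      have := padicValRat.min_le_padicValRat_add (p := l) hr
      rw [hb, hv] at this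
      simpa using this
    have h2 : padicValRat l (gmap d b u) < 0 := by
      rw [gmap_val hl hu hr, hv]
      have : 1 ≤ padicValRat l (b + u) := by omega
      nlinarith
    have := back hN h _ hinv 2 ⟨hg', hnegstep _ hg hr' h2⟩
    omega
  · exact (hpos u hu hv).2

lemma int_ppow {p : ℕ} (hp : p.Prime) {M : ℤ} (hM : M ≠ 0)
    (h : ∀ l : ℕ, l.Prime → l ≠ p → padicValRat l (M : ℚ) = 0) :
    M.natAbs = p ^ padicValInt p M := by
  have h1 := rat_ppow hp (q := (M : ℚ)) (by exact_mod_cast hM) h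
  rw [padicValRat.of_int, zpow_natCast] at h1
  have h2 : M = ((p ^ padicValInt p M : ℕ) : ℤ) ∨ M = -((p ^ padicValInt p M : ℕ) : ℤ) := by
    push_cast
    exact_mod_cast h1
  exact Int.natAbs_eq_iff.2 h2

lemma int_key_per {p : ℕ} (hp : p.Prime) {b R : ℤ} {d e k t : ℕ} (hd : 2 ≤ d) (he : 1 ≤ e)
    (hk : 1 ≤ k) (hb : b.natAbs = p ^ e) (hR : R.natAbs = p ^ k) (hRb : R ≠ b)
    (hM : (R - b + b * R ^ d).natAbs = p ^ t) : d = 2 ∧ R = -b ∧ R ^ 2 = 4 := by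
  have hP := Nat.prime_iff_prime_int.1 hp
  have habs : ∀ (x : ℤ) (j : ℕ), 1 ≤ j → x.natAbs = p ^ j → 2 ≤ |x| ∧ (p : ℤ) ∣ x ∧ x ≠ 0 := by
    intro x j hj hx
    have h1 : p ∣ p ^ j := dvd_pow_self p (by omega)
    have h2 : 2 ≤ p ^ j := hp.two_le.trans (Nat.le_of_dvd (pow_pos hp.pos j) h1)
    refine ⟨?_, by rw [Int.natCast_dvd, hx]; exact h1, by omega⟩
    rw [Int.abs_eq_natAbs]; omega
  obtain ⟨hb2, hpb, hb0⟩ := habs b e he hb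
  obtain ⟨hR2, hpR, hR0⟩ := habs R k hk hR
  have hRd4 : 4 ≤ |R ^ d| := by
    have := abs_pow_ge hR2 hd
    nlinarith
  have hRd0 : R ^ d ≠ 0 := pow_ne_zero _ hR0
  have hpRd : (p : ℤ) ∣ R ^ d := dvd_pow hpR (by omega)
  have hdiv : ∀ (x y : ℤ) (i j : ℕ), i < j → x.natAbs = p ^ i → y.natAbs = p ^ j →
      ∃ c, y = x * c ∧ (p : ℤ) ∣ c ∧ c ≠ 0 := by
    intro x y i j hij hx hy
    have : x ∣ y := by
      rw [← Int.natAbs_dvd_natAbs, hx, hy]; exact pow_dvd_pow p hij.le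
    obtain ⟨c, hc⟩ := this
    have hcn : c.natAbs = p ^ (j - i) := by
      apply Nat.eq_of_mul_eq_mul_left (pow_pos hp.pos i)
      rw [← pow_add, Nat.add_sub_cancel' hij.le, ← hy, hc, Int.natAbs_mul, hx]
    obtain ⟨_, h1, h2⟩ := habs c (j - i) (by omega) hcn
    exact ⟨c, hc, h1, h2⟩
  have hp1 : ¬ (p : ℤ) ∣ 1 := fun h => hP.not_isUnit (isUnit_of_dvd_one h)
  rcases lt_trichotomy k e with hke | hke | hke
  · exfalso
    obtain ⟨c, hc, hpc, hc0⟩ := hdiv R b k e hke hR hb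
    have h1 : (1 - c + c * R ^ d) = 1 ∨ (1 - c + c * R ^ d) = -1 := by
      apply unit_of_dvd_pow hp hM
      · exact Dvd.intro_left R (by rw [hc]; ring)
      · intro h
        apply hp1
        have := dvd_sub h (hpc.mul_right (R ^ d - 1))
        rwa [show 1 - c + c * R ^ d - c * (R ^ d - 1) = 1 by ring] at this
    have h2 : c * (R ^ d - 1) = 0 ∨ c * (R ^ d - 1) = -2 := by
      rcases h1 with h | h
      · left; linarith
      · right; linarith
    have h3 : 3 ≤ |R ^ d - 1| := by
      rcases abs_cases (R ^ d) with ⟨h, _⟩ | ⟨h, _⟩ <;>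
      rcases abs_cases (R ^ d - 1) with ⟨h, _⟩ | ⟨h, _⟩ <;> omega
    have h4 : 1 ≤ |c| := Int.one_le_abs hc0
    have h5 : |c * (R ^ d - 1)| ≤ 2 := by
      rcases h2 with h | h <;> rw [h] <;> norm_num
    rw [abs_mul] at h5
    nlinarith
  · subst hke
    have hRb' : R = -b := by omega
    refine (?_ : d = 2 ∧ R ^ 2 = 4).imp id (fun h => ⟨hRb', h⟩)
    have hb' : b = -R := by omega
    have hN : 2 - R ^ d ∣ R - b + b * R ^ d := Dvd.intro_left R (by rw [hb']; ring)
    have hRd : |R ^ d| = 4 := by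
      by_cases hpN : (p : ℤ) ∣ 2 - R ^ d
      · have hp2 : (p : ℤ) ∣ 2 := by
          have := dvd_add hpN hpRd
          simpa using this
        have hp2' : p = 2 := by
          have : p ∣ 2 := by exact_mod_cast hp2
          exact (Nat.prime_dvd_prime_iff_eq hp Nat.prime_two).1 this
        subst hp2'
        have hpRd2 : (4 : ℤ) ∣ R ^ d := by
          have : (2 : ℤ) ^ 2 ∣ R ^ d := (pow_dvd_pow_of_dvd (by exact_mod_cast hpR) 2).trans
            (pow_dvd_pow R hd)
          simpa using this
        obtain ⟨c, hc⟩ := hpRd2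
        have h1 : (1 - 2 * c) = 1 ∨ (1 - 2 * c) = -1 := by
          apply unit_of_dvd_pow hp hM
          · refine dvd_trans ?_ hN
            exact Dvd.intro_left 2 (by rw [hc]; ring)
          · push_cast
            omega
        have : c = 0 ∨ c = 1 := by omega
        rcases this with h | h
        · exfalso; apply hRd0; rw [hc, h]; norm_num
        · rw [hc, h]; norm_num
      · exfalso
        have := unit_of_dvd_pow hp hM hN hpN
        rcases abs_cases (R ^ d) with ⟨h, _⟩ | ⟨h, _⟩ <;> omega
    have hd2 : d = 2 := by
      by_contra hne
      have := abs_pow_ge hR2 (show 3 ≤ d by omega)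
      rw [hRd] at this
      nlinarith [mul_le_mul hR2 hR2 (by norm_num) (by positivity)]
    subst hd2
    exact ⟨rfl, by rwa [abs_of_nonneg (by positivity)] at hRd⟩
  · exfalso
    obtain ⟨c, hc, hpc, hc0⟩ := hdiv b R e k hke hb hR
    have h1 : (c - 1 + R ^ d) = 1 ∨ (c - 1 + R ^ d) = -1 := by
      apply unit_of_dvd_pow hp hM
      · exact Dvd.intro_left b (by rw [hc]; ring)
      · intro h
        apply hp1
        have := dvd_sub (dvd_add hpc hpRd) h
        rwa [show c + R ^ d - (c - 1 + R ^ d) = 1 by ring] at this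
    obtain ⟨n, rfl⟩ : ∃ n, d = n + 1 := ⟨d - 1, by omega⟩
    have h2 : c * (1 + b * R ^ n) = 0 ∨ c * (1 + b * R ^ n) = 2 := by
      have : R ^ (n + 1) = c * (b * R ^ n) := by rw [pow_succ]; nth_rw 2 [hc]; ring
      rw [this] at h1
      rcases h1 with h | h
      · right; linarith
      · left; linarith
    have h3' : 4 ≤ |b * R ^ n| := by
      have := abs_pow_ge hR2 (show 1 ≤ n by omega)
      rw [abs_mul]
      nlinarith
    have h3 : 3 ≤ |1 + b * R ^ n| := by
      rcases abs_cases (b * R ^ n) with ⟨h, _⟩ | ⟨h, _⟩ <;>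
      rcases abs_cases (1 + b * R ^ n) with ⟨h, _⟩ | ⟨h, _⟩ <;> omega
    have h4 : 1 ≤ |c| := Int.one_le_abs hc0
    have h5 : |c * (1 + b * R ^ n)| ≤ 2 := by
      rcases h2 with h | h <;> rw [h] <;> norm_num
    rw [abs_mul] at h5
    nlinarith

lemma per_val_nonpos {p : ℕ} (hp : p.Prime) {b : ℤ} {e d : ℕ} (hd : 2 ≤ d) (he : 1 ≤ e)
    (hb : b.natAbs = p ^ e) {u : ℚ} {N : ℕ} (hN : 0 < N) (h : (gmap d b)^[N] u = u)
    (hu : u ≠ 0)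
    (hl : ∀ x : ℚ, (gmap d b)^[N] x = x → x ≠ 0 → ∀ l : ℕ, l.Prime → l ≠ p →
      padicValRat l (b + x) = 0) : padicValRat p (b + u) ≤ 0 := by
  by_contra hpos
  push Not at hpos
  obtain ⟨hg, hr⟩ := gmap_ne hd hN h hu
  obtain ⟨hg', hr'⟩ := gmap_ne hd hN (per_step h) hg
  have h1 := rat_ppow hp hr (hl u h hu)
  obtain ⟨k, hk⟩ : ∃ k : ℕ, padicValRat p (b + u) = k := ⟨(padicValRat p (b + u)).toNat, by omega⟩
  rw [hk, zpow_natCast] at h1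
  obtain ⟨R, hRr, hR⟩ : ∃ R : ℤ, (R : ℚ) = b + u ∧ R.natAbs = p ^ k := by
    rcases h1 with h1 | h1
    · exact ⟨(p : ℤ) ^ k, by rw [h1]; push_cast; rfl, by simp [Int.natAbs_pow]⟩
    · exact ⟨-(p : ℤ) ^ k, by rw [h1]; push_cast; rfl, by simp [Int.natAbs_pow]⟩
  have hRb : R ≠ b := by
    intro h0
    rw [h0] at hRr
    apply hu; linarith
  have hM : ((R - b + b * R ^ d : ℤ) : ℚ) = (b + gmap d b u) * (b + u) ^ d := by
    push_cast
    rw [hRr, gmap]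
    have : ((b : ℚ) + u) ^ d ≠ 0 := pow_ne_zero _ hr
    field_simp
    ring
  have hM0 : R - b + b * R ^ d ≠ 0 := by
    intro h0
    rw [h0] at hM
    exact mul_ne_zero hr' (pow_ne_zero _ hr) (by simpa using hM.symm)
  have hMp := int_ppow hp hM0 (by
    intro l hlp hne
    have := Fact.mk hlp
    rw [hM, padicValRat.mul hr' (pow_ne_zero _ hr), padicValRat.pow, hl u h hu l hlp hne,
      hl _ (per_step h) hg l hlp hne]
    simp)
  obtain ⟨h2, h3, h4⟩ := int_key_per hp hd he (by omega) hb hR hRb hMp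
  subst h2
  have h3q : (R : ℚ) = -b := by rw [h3]; push_cast; rfl
  have h4q : (R : ℚ) ^ 2 = 4 := by exact_mod_cast h4
  have hu2 : u = 2 * R := by rw [h3q] at hRr; rw [h3q]; linarith
  have hgu : gmap 2 b u = R / 2 := by
    rw [gmap, ← hRr, h4q, hu2]; ring
  have hfix : gmap 2 b (gmap 2 b u) = gmap 2 b u := by
    rw [hgu, gmap, show (b : ℚ) + R / 2 = -(R / 2) by rw [h3q]; ring]
    rw [show (-((R : ℚ) / 2)) ^ 2 = 1 by rw [neg_sq, div_pow, h4q]; norm_num, div_one]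
  have := back hN h (fun x => gmap 2 b x = x) (by intro x hx; rw [hx, hx]) 1 hfix
  rw [this] at hgu
  rw [hu2] at hgu
  have : (R : ℚ) = 0 := by linarith
  rw [this] at h4q
  norm_num at h4q

lemma per_unit {p : ℕ} (hp : p.Prime) {b : ℤ} {e d : ℕ} (hd : 2 ≤ d)
    (hb : b.natAbs = p ^ e) {u : ℚ} {N : ℕ} (hN : 0 < N) (h : (gmap d b)^[N] u = u)
    (hu : u ≠ 0) : b + u = 1 ∨ b + u = -1 := by
  have hb0 : b ≠ 0 := by
    rintro rfl
    have := pow_pos hp.pos e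
    simp at hb; omega
  have hb0q : (b : ℚ) ≠ 0 := by exact_mod_cast hb0
  have hd' : (2 : ℤ) ≤ d := by exact_mod_cast hd
  have hlb : ∀ l : ℕ, l.Prime → (l ≠ p ∨ e = 0) → padicValRat l (b : ℚ) = 0 := by
    intro l hl hh
    have := Fact.mk hl
    have := Fact.mk hp
    rw [padicValRat.of_int, padicValInt, hb]
    rcases hh with hh | hh
    · rw [padicValNat.pow, padicValNat_primes hh]; simp
    · rw [hh]; simp
  obtain ⟨hg, hr⟩ := gmap_ne hd hN h hu
  apply rat_unit hr
  intro l hl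
  by_cases hh : l ≠ p ∨ e = 0
  · exact val_zero hl hd hb0q (hlb l hl hh) hN h hu
  push Not at hh
  obtain ⟨rfl, he⟩ := hh
  have hall : ∀ x : ℚ, (gmap d b)^[N] x = x → x ≠ 0 → padicValRat l (b + x) ≤ 0 := by
    intro x hx hx0
    apply per_val_nonpos hp hd (by omega) hb hN hx hx0
    intro y hy hy0 m hm hne
    exact val_zero hm hd hb0q (hlb m hm (Or.inl hne)) hN hy hy0
  have h1 := hall u h hu
  have h2 := back hN h (fun x => ((gmap d b)^[N] x = x ∧ x ≠ 0) ∧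
      padicValRat l (gmap d b u) ≤ padicValRat l x) (by
    rintro x ⟨⟨hx, hx0⟩, hv⟩
    obtain ⟨hgx, hrx⟩ := gmap_ne hd hN hx hx0
    refine ⟨⟨per_step hx, hgx⟩, ?_⟩
    rw [gmap_val hl hx0 hrx]
    have := hall x hx hx0
    nlinarith) 1 ⟨⟨per_step h, hg⟩, le_refl _⟩
  have h3 := h2.2
  rw [gmap_val hl hu hr] at h3
  nlinarith

lemma per_QQ {p : ℕ} (hp : p.Prime) {b : ℤ} {e d : ℕ} (hd : 2 ≤ d)
    (hb : b.natAbs = p ^ e) {u : ℚ} {N : ℕ} (hN : 0 < N) (h : (gmap d b)^[N] u = u) :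
    QQ d b u := by
  by_cases hu : u = 0
  · left; exact hu
  rcases per_unit hp hd hb hN h hu with h1 | h1
  · right; right; left; linarith
  · rcases Nat.even_or_odd d with hev | hodd
    · right; right; right; left; exact ⟨hev, by linarith⟩
    · exfalso
      have hg := (gmap_ne hd hN h hu).1
      have hgu : gmap d b u = -u := by
        rw [gmap, h1, hodd.neg_one_pow]; ring
      have hb0 : (b : ℚ) ≠ 0 := by
        intro h0
        have h0' : b = 0 := by exact_mod_cast h0
        have := pow_pos hp.pos e
        rw [h0'] at hb
        simp at hb; omega
      rcases per_unit hp hd hb hN (per_step h) hg with h2 | h2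
      · rw [hgu] at h2; apply hb0; linarith
      · rw [hgu] at h2; apply hu; linarith

lemma preper_QQ {p : ℕ} (hp : p.Prime) {b : ℤ} {e d : ℕ} (hd : 2 ≤ d)
    (hb : b.natAbs = p ^ e) {u : ℚ} {m n : ℕ} (hmn : m < n)
    (h : (gmap d b)^[m] u = (gmap d b)^[n] u) : QQ d b u := by
  have h1 : QQ d b ((gmap d b)^[m] u) := by
    apply per_QQ hp hd hb (N := n - m) (by omega)
    rw [← Function.iterate_add_apply, Nat.sub_add_cancel hmn.le, h]
  clear h
  clear hmn
  induction m with
  | zero => exact h1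
  | succ m ih =>
    rw [Function.iterate_succ_apply'] at h1
    exact ih (QQ_back hp hd hb _ h1)

lemma no_sq1 {b : ℤ} (h : IsSquare ((b : ℚ) * (b - 1))) : b = 0 ∨ b = 1 := by
  have h' : IsSquare (b * (b - 1)) := by
    rw [← Rat.isSquare_intCast_iff]; push_cast; exact h
  obtain ⟨c, hc⟩ := h'
  have h1 : (2 * b - 1 - 2 * c) * (2 * b - 1 + 2 * c) = 1 := by linear_combination 4 * hc
  have := Int.eq_one_or_neg_one_of_mul_eq_one' h1
  omega

lemma no_sq2 {b : ℤ} (h : IsSquare ((b : ℚ) ^ 2 - 1)) : b = 1 ∨ b = -1 := by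
  have h' : IsSquare (b ^ 2 - 1) := by
    rw [← Rat.isSquare_intCast_iff]; push_cast; exact h
  obtain ⟨c, hc⟩ := h'
  have h1 : (b - c) * (b + c) = 1 := by linear_combination hc
  have := Int.eq_one_or_neg_one_of_mul_eq_one' h1
  omega

lemma sq_class {d : ℕ} (hev : Even d) {a z w s t u v : ℚ} (hz : a * z ^ d = u * s ^ 2)
    (hw : a * w ^ d = v * t ^ 2) (hs : s ≠ 0) (ht : t ≠ 0) : IsSquare (u * v) := by
  obtain ⟨m, rfl⟩ := hev
  refine ⟨a * z ^ m * w ^ m / (s * t), ?_⟩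
  field_simp
  have : (a * z ^ (m + m)) * (a * w ^ (m + m)) = (u * s ^ 2) * (v * t ^ 2) := by rw [hz, hw]
  rw [pow_add, pow_add] at this
  linear_combination -this

lemma two_values {d : ℕ} {b : ℤ} (hb : b ≠ 0) {a : ℚ} (ha : a ≠ 0) :
    ∃ u1 u2 : ℚ, ∀ z : ℚ, QQ d b (a * z ^ d) → z = 0 ∨ a * z ^ d = u1 ∨ a * z ^ d = u2 := by
  have hz0 : ∀ z : ℚ, a * z ^ d = 0 → z = 0 := by
    intro z hz
    rcases mul_eq_zero.1 hz with h | h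
    · exact absurd h ha
    · exact eq_zero_of_pow_eq_zero h
  rcases Nat.even_or_odd d with hev | hodd
  swap
  · refine ⟨-b, 1 - b, ?_⟩
    rintro z (h | h | h | ⟨h, _⟩ | ⟨h, _⟩ | ⟨h, _⟩)
    · left; exact hz0 z h
    · tauto
    · tauto
    · exact absurd h (Nat.not_even_iff_odd.2 hodd)
    · subst h; exact absurd hodd (by decide)
    · subst h; exact absurd hodd (by decide)
  have hbq : (b : ℚ) ≠ 0 := by exact_mod_cast hb
  let C1 : ℚ → Prop := fun z => a * z ^ d = -b
  let C2 : ℚ → Prop := fun z => b ≠ 1 ∧ (a * z ^ d = 1 - b ∨ a * z ^ d = b ^ 2 / (1 - b))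
  let C3 : ℚ → Prop := fun z => b ≠ -1 ∧ (a * z ^ d = -1 - b ∨ a * z ^ d = -(b ^ 2 / (1 + b)))
  have hcl : ∀ z, QQ d b (a * z ^ d) → z = 0 ∨ C1 z ∨ C2 z ∨ C3 z := by
    rintro z (h | h | h | ⟨_, h⟩ | ⟨_, h1, h⟩ | ⟨_, h1, h⟩)
    · left; exact hz0 z h
    · right; left; exact h
    · by_cases hb1 : b = 1
      · left; apply hz0; rw [h, hb1]; norm_num
      · right; right; left; exact ⟨hb1, Or.inl h⟩
    · by_cases hb1 : b = -1
      · left; apply hz0; rw [h, hb1]; norm_num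
      · right; right; right; exact ⟨hb1, Or.inl h⟩
    · right; right; left; exact ⟨by exact_mod_cast h1, Or.inr h⟩
    · right; right; right; exact ⟨by exact_mod_cast h1, Or.inr h⟩
  have e1 : ∀ z, C1 z → ∃ s : ℚ, s ≠ 0 ∧ a * z ^ d = (-b) * s ^ 2 := by
    intro z h
    exact ⟨1, one_ne_zero, by rw [h]; ring⟩
  have e2 : ∀ z, C2 z → ∃ s : ℚ, s ≠ 0 ∧ a * z ^ d = (1 - b) * s ^ 2 := by
    rintro z ⟨hb1, h | h⟩
    · exact ⟨1, one_ne_zero, by rw [h]; ring⟩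
    · have hb1q : (b : ℚ) ≠ 1 := by exact_mod_cast hb1
      have hb1' : (1 - b : ℚ) ≠ 0 := fun h0 => hb1q (by linarith)
      exact ⟨b / (1 - b), div_ne_zero hbq hb1', by rw [h]; field_simp⟩
  have e3 : ∀ z, C3 z → ∃ s : ℚ, s ≠ 0 ∧ a * z ^ d = (-1 - b) * s ^ 2 := by
    rintro z ⟨hb1, h | h⟩
    · exact ⟨1, one_ne_zero, by rw [h]; ring⟩
    · have hb1q : (b : ℚ) ≠ -1 := by exact_mod_cast hb1
      have hb1' : (1 + b : ℚ) ≠ 0 := fun h0 => hb1q (by linarith)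
      exact ⟨b / (1 + b), div_ne_zero hbq hb1', by rw [h]; field_simp; ring⟩
  have n12 : ∀ z w, C1 z → C2 w → False := by
    intro z w hz hw
    obtain ⟨s, hs, hs2⟩ := e1 z hz
    obtain ⟨t, ht, ht2⟩ := e2 w hw
    have := sq_class hev hs2 ht2 hs ht
    rw [show -(b : ℚ) * (1 - b) = b * (b - 1) by ring] at this
    rcases no_sq1 this with h | h
    · exact hb h
    · exact hw.1 h
  have n13 : ∀ z w, C1 z → C3 w → False := by
    intro z w hz hw
    obtain ⟨s, hs, hs2⟩ := e1 z hz
    obtain ⟨t, ht, ht2⟩ := e3 w hw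
    have := sq_class hev hs2 ht2 hs ht
    rw [show -(b : ℚ) * (-1 - b) = ((-b : ℤ) : ℚ) * ((-b : ℤ) - 1) by push_cast; ring] at this
    rcases no_sq1 this with h | h
    · omega
    · exact hw.1 (by omega)
  have n23 : ∀ z w, C2 z → C3 w → False := by
    intro z w hz hw
    obtain ⟨s, hs, hs2⟩ := e2 z hz
    obtain ⟨t, ht, ht2⟩ := e3 w hw
    have := sq_class hev hs2 ht2 hs ht
    rw [show (1 - b : ℚ) * (-1 - b) = (b : ℚ) ^ 2 - 1 by ring] at this
    rcases no_sq2 this with h | h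
    · exact hz.1 h
    · exact hw.1 h
  by_cases h1 : ∃ z, C1 z
  · obtain ⟨w, hw⟩ := h1
    refine ⟨-b, -b, fun z hz => ?_⟩
    rcases hcl z hz with h | h | h | h
    · left; exact h
    · right; left; exact h
    · exact (n12 w z hw h).elim
    · exact (n13 w z hw h).elim
  by_cases h2 : ∃ z, C2 z
  · obtain ⟨w, hw⟩ := h2
    refine ⟨1 - b, b ^ 2 / (1 - b), fun z hz => ?_⟩
    rcases hcl z hz with h | h | h | h
    · left; exact h
    · exact (h1 ⟨z, h⟩).elim
    · right; exact h.2
    · exact (n23 w z hw h).elim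
  · refine ⟨-1 - b, -(b ^ 2 / (1 + b)), fun z hz => ?_⟩
    rcases hcl z hz with h | h | h | h
    · left; exact h
    · exact (h1 ⟨z, h⟩).elim
    · exact (h2 ⟨z, h⟩).elim
    · right; exact h.2

lemma root_pair {d : ℕ} (hd : 2 ≤ d) {a : ℚ} (ha : a ≠ 0) (c : ℚ) :
    ∃ t : ℚ, ∀ z : ℚ, a * z ^ d = c → z = t ∨ z = -t := by
  by_cases h : ∃ t : ℚ, a * t ^ d = c
  · obtain ⟨t, ht⟩ := h
    refine ⟨t, fun z hz => ?_⟩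
    have h1 : z ^ d = t ^ d := mul_left_cancel₀ ha (hz.trans ht.symm)
    have h2 : |z| ^ d = |t| ^ d := by rw [← abs_pow, ← abs_pow, h1]
    have h3 : |z| = |t| := (pow_left_inj₀ (abs_nonneg z) (abs_nonneg t) (by omega)).1 h2
    exact abs_eq_abs.1 h3
  · push Not at h
    exact ⟨0, fun z hz => absurd hz (h z)⟩

/-- Projection to `u = a z ^ d`. -/
def uproj (d : ℕ) (a : ℚ) : Option ℚ → ℚ
  | none => 0
  | some z => a * z ^ d

lemma uproj_semiconj {d : ℕ} (hd : 2 ≤ d) (a b : ℚ) :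
    Function.Semiconj (uproj d a) (psi d a b) (gmap d b) := by
  intro P
  have hd0 : d ≠ 0 := by omega
  cases P with
  | none => simp [psi, uproj, gmap, hd0]
  | some z =>
    by_cases h : a * z ^ d + b = 0
    · simp [psi, uproj, gmap, h, add_comm b, hd0]
    · simp only [psi, uproj, gmap, h, if_false]
      rw [div_pow, add_comm b, mul_div_assoc]

/-- Let `p` be a prime, `d ≥ 2`, `a` a nonzero rational, and
`b = σ·p^e` with `σ ∈ {1,−1}` and `e ≥ 0`. Then `ψ_{d,a,b}` has at most `6`
rational preperiodic points (points with finite forward orbit, equivalently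
eventually periodic points). -/
theorem preper_card_le_six
    (p : ℕ) (hp : p.Prime) (d : ℕ) (hd : 2 ≤ d) (a : ℚ) (ha : a ≠ 0)
    (σ : ℚ) (hσ : σ = 1 ∨ σ = -1) (e : ℕ) (b : ℚ) (hb : b = σ * (p : ℚ) ^ e) :
    {P : Option ℚ | ∃ m n : ℕ, m < n ∧ (psi d a b)^[m] P = (psi d a b)^[n] P}.encard ≤ 6 := by
  obtain ⟨B, hB, hbB⟩ : ∃ B : ℤ, B.natAbs = p ^ e ∧ b = B := by
    rcases hσ with rfl | rfl
    · exact ⟨(p : ℤ) ^ e, by simp [Int.natAbs_pow], by rw [hb]; push_cast; ring⟩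
    · exact ⟨-(p : ℤ) ^ e, by simp [Int.natAbs_pow], by rw [hb]; push_cast; ring⟩
  have hB0 : B ≠ 0 := by
    rintro rfl
    have := pow_pos hp.pos e
    simp at hB; omega
  obtain ⟨u1, u2, hu⟩ := two_values (d := d) hB0 ha
  obtain ⟨t1, ht1⟩ := root_pair hd ha u1
  obtain ⟨t2, ht2⟩ := root_pair hd ha u2
  have hsub : {P : Option ℚ | ∃ m n : ℕ, m < n ∧ (psi d a b)^[m] P = (psi d a b)^[n] P} ⊆
      (({none, some 0, some t1, some (-t1), some t2, some (-t2)} : Finset (Option ℚ)) :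
        Set (Option ℚ)) := by
    rintro P ⟨m, n, hmn, hP⟩
    cases P with
    | none => simp
    | some z =>
      have hs := uproj_semiconj hd a b
      have h1 : (gmap d b)^[m] (uproj d a (some z)) = (gmap d b)^[n] (uproj d a (some z)) := by
        rw [← (hs.iterate_right m).eq, ← (hs.iterate_right n).eq, hP]
      rw [hbB] at h1
      have h2 := preper_QQ hp hd hB hmn h1
      rcases hu z h2 with h | h | h
      · simp [h]
      · rcases ht1 z h with h | h <;> simp [h]
      · rcases ht2 z h with h | h <;> simp [h]
  refine (Set.encard_le_encard hsub).trans ?_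
  rw [Set.encard_coe_eq_coe_finsetCard]
  exact_mod_cast Finset.card_le_six
end

section
/- Let p be a prime, d ≥ 3 an integer, a a nonzero rational, and b = σ·p^e with σ ∈ {1, −1} and e ≥ 0 an integer. Then the set PrePer(ψ_{d,a,b}, ℙ¹(ℚ)) of rational preperiodic points of ψ_{d,a,b} has at most 6 elements. -/
namespace PsiAux

/-- Periodic products: if the step ratios `c` stay `≥ 1` after exceeding `1`, all are `1`. -/
lemma ratio_one (x c : ℕ → ℚ) (n : ℕ) (hn : 0 < n) (hx : ∀ i, 0 < x i) (hc : ∀ i, 0 < c i)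
    (hxc : ∀ i, x (i+1) * c i = x i) (hper : ∀ i, x (i+n) = x i)
    (h : ∀ i, 1 < c i → ∀ j, i < j → 1 ≤ c j) : ∀ i, c i = 1 := by
  have h1 : ∀ i, c i ≤ 1 := by
    intro i
    by_contra hci
    push Not at hci
    have ha : ∀ k, x (i+1+k) ≤ x (i+1) := by
      intro k
      induction k with
      | zero => simp
      | succ k ih =>
        have h2 := h i hci (i+1+k) (by omega)
        have h3 := hxc (i+1+k)
        have h4 := hx (i+1+k+1)
        have : x (i+1+k+1) ≤ x (i+1+k) := by nlinarith
        exact this.trans ih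
    have h5 := ha (n-1)
    have h6 : i + 1 + (n-1) = i + n := by omega
    rw [h6, hper] at h5
    have := hxc i
    have := hx (i+1)
    nlinarith
  have hm : ∀ i k, x i ≤ x (i+k) := by
    intro i k
    induction k with
    | zero => simp
    | succ k ih =>
      have h2 := h1 (i+k)
      have h3 := hxc (i+k)
      have h4 := hx (i+k+1)
      have : x (i+k) ≤ x (i+k+1) := by nlinarith
      exact ih.trans this
  intro i
  refine le_antisymm (h1 i) ?_
  have h5 := hm (i+1) (n-1)
  have h6 : i + 1 + (n-1) = i + n := by omega
  rw [h6, hper] at h5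
  have h7 := hxc i
  have h8 := hx (i+1)
  by_contra hlt
  push Not at hlt
  nlinarith

lemma abs_one_of_norms (x : ℚ) (hx : x ≠ 0) (h : ∀ q : ℕ, q.Prime → padicNorm q x = 1) :
    |x| = 1 := by
  have hv : ∀ q : ℕ, q.Prime → padicValRat q x = 0 := by
    intro q hq
    have h1 := h q hq
    rw [padicNorm.eq_zpow_of_nonzero hx] at h1
    have hq1 : (1:ℚ) < q := by exact_mod_cast hq.one_lt
    have := (zpow_eq_one_iff_right₀ (by linarith) (by linarith)).1 h1
    omega
  have key : ∀ q : ℕ, q.Prime → ¬ q ∣ x.num.natAbs ∧ ¬ q ∣ x.den := by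
    intro q hq
    have h1 := hv q hq
    have := Fact.mk hq
    rw [padicValRat] at h1
    have hcop := x.reduced
    have hden := x.den_ne_zero
    have hnum : x.num.natAbs ≠ 0 := by simpa using hx
    unfold padicValInt at h1
    have e1 : padicValNat q x.num.natAbs = padicValNat q x.den := by omega
    constructor
    · intro hd
      have : ¬ q ∣ x.den := fun h2 => hq.one_lt.ne' (Nat.eq_one_of_dvd_coprimes hcop hd h2)
      rw [padicValNat.eq_zero_of_not_dvd this] at e1
      have := one_le_padicValNat_of_dvd hnum hd
      omega
    · intro hd
      have : ¬ q ∣ x.num.natAbs :=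
        fun h2 => hq.one_lt.ne' (Nat.eq_one_of_dvd_coprimes hcop h2 hd)
      rw [padicValNat.eq_zero_of_not_dvd this] at e1
      have := one_le_padicValNat_of_dvd hden hd
      omega
  have hn1 : x.num.natAbs = 1 := by
    by_contra hne
    obtain ⟨q, hq, hd⟩ := Nat.exists_prime_and_dvd hne
    exact (key q hq).1 hd
  have hd1 : x.den = 1 := by
    by_contra hne
    obtain ⟨q, hq, hd⟩ := Nat.exists_prime_and_dvd hne
    exact (key q hq).2 hd
  have : x = x.num := by
    conv_lhs => rw [← Rat.num_div_den x, hd1]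
    simp
  rw [this, ← Int.cast_abs, Int.abs_eq_natAbs, hn1]
  simp

/-- a rational that is a unit away from `p` has absolute value a power of `p` -/
lemma abs_zpow (p : ℕ) (hp : p.Prime) (x : ℚ) (hx : x ≠ 0)
    (h : ∀ q : ℕ, q.Prime → q ≠ p → padicNorm q x = 1) : ∃ s : ℤ, |x| = (p:ℚ) ^ s := by
  have hp0 : (p:ℚ) ≠ 0 := by exact_mod_cast hp.ne_zero
  have hpp : (0:ℚ) < p := by exact_mod_cast hp.pos
  refine ⟨padicValRat p x, ?_⟩
  set s := padicValRat p x with hs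
  have hps : (p:ℚ)^s ≠ 0 := zpow_ne_zero _ hp0
  have := abs_one_of_norms (x / (p:ℚ)^s) (div_ne_zero hx hps) ?_
  · rw [abs_div, abs_of_pos (zpow_pos hpp s)] at this
    field_simp at this
    exact this
  · intro q hq
    have := Fact.mk hq
    have := Fact.mk hp
    by_cases hqp : q = p
    · subst hqp
      rw [padicNorm.div, padicNorm.eq_zpow_of_nonzero hx, ← hs]
      have hq' : padicNorm q ((q:ℚ)^s) = (padicNorm q (q:ℚ))^s :=
        map_zpow₀ (IsAbsoluteValue.toAbsoluteValue (padicNorm q)) _ _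
      rw [hq', padicNorm.padicNorm_p_of_prime, inv_zpow, ← zpow_neg]
      exact div_self (zpow_ne_zero _ hp0)
    · rw [padicNorm.div, h q hq hqp]
      have : padicNorm q ((p:ℚ)^s) = (padicNorm q (p:ℚ))^s :=
        map_zpow₀ (IsAbsoluteValue.toAbsoluteValue (padicNorm q)) _ _
      rw [this, padicNorm.padicNorm_of_prime_of_ne hqp]
      simp

lemma zpow_trich (p : ℕ) (hp : p.Prime) (c : ℚ) (h : ∃ s : ℤ, c = (p:ℚ) ^ s) :
    c ≤ 1/2 ∨ c = 1 ∨ 2 ≤ c := by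
  obtain ⟨s, rfl⟩ := h
  have hp2 : (2:ℚ) ≤ p := by exact_mod_cast hp.two_le
  rcases lt_trichotomy s 0 with hs | hs | hs
  · left
    have : (p:ℚ)^s ≤ (p:ℚ)^(-1:ℤ) := zpow_le_zpow_right₀ (by linarith) (by omega)
    refine this.trans ?_
    rw [zpow_neg_one, inv_eq_one_div]
    exact one_div_le_one_div_of_le (by norm_num) hp2
  · right; left; simp [hs]
  · right; right
    have : (p:ℚ)^(1:ℤ) ≤ (p:ℚ)^s := zpow_le_zpow_right₀ (by linarith) (by omega)
    rw [zpow_one] at this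
    linarith

lemma norm_pow (q : ℕ) [Fact q.Prime] (x : ℚ) (n : ℕ) : padicNorm q (x^n) = padicNorm q x ^ n :=
  map_pow (IsAbsoluteValue.toAbsoluteValue (padicNorm q)) _ _

lemma norm_add_small (q : ℕ) [Fact q.Prime] (w b : ℚ) (hb : padicNorm q b = 1)
    (hw : padicNorm q w < 1) : padicNorm q (w + b) = 1 := by
  rw [padicNorm.add_eq_max_of_ne (by rw [hb]; exact hw.ne), hb]
  exact max_eq_right hw.le

lemma norm_add_large (q : ℕ) [Fact q.Prime] (w b : ℚ) (hb : padicNorm q b = 1)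
    (hw : 1 < padicNorm q w) : padicNorm q (w + b) = padicNorm q w := by
  rw [padicNorm.add_eq_max_of_ne (by rw [hb]; exact hw.ne'), hb]
  exact max_eq_left hw.le

lemma norm_large_of_add (q : ℕ) [Fact q.Prime] (w b : ℚ) (hb : padicNorm q b = 1)
    (hw : 1 < padicNorm q (w + b)) : 1 < padicNorm q w := by
  by_contra h
  push Not at h
  have := padicNorm.nonarchimedean (p := q) (q := w) (r := b)
  rw [hb] at this
  have := this.trans (max_le h le_rfl)
  linarith

lemma norm_pos (q : ℕ) [Fact q.Prime] (x : ℚ) (hx : x ≠ 0) : 0 < padicNorm q x :=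
  lt_of_le_of_ne (padicNorm.nonneg x) (padicNorm.nonzero hx).symm

lemma norm_b (p : ℕ) (hp : p.Prime) (e : ℕ) (b : ℤ) (hb : b.natAbs = p ^ e) (q : ℕ)
    (hq : q.Prime) (h : q ≠ p ∨ e = 0) : padicNorm q (b:ℚ) = 1 := by
  have := Fact.mk hq
  rw [padicNorm.int_eq_one_iff]
  intro hd
  have h1 : q ∣ p ^ e := by rw [← hb]; exact Int.natCast_dvd.1 hd
  rcases h with h | h
  · exact h ((Nat.prime_dvd_prime_iff_eq hq hp).1 (hq.dvd_of_dvd_pow h1))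
  · subst h
    simp at h1
    exact hq.one_lt.ne' h1

lemma abs_b (p : ℕ) (e : ℕ) (b : ℤ) (hb : b.natAbs = p ^ e) : |(b:ℚ)| = (p:ℚ)^e := by
  rw [← Int.cast_abs, Int.abs_eq_natAbs, hb]; push_cast; rfl

/-- Periodic orbits. -/
lemma periodic_unit (p : ℕ) (hp : p.Prime) (d : ℕ) (hd : 3 ≤ d) (a : ℚ) (ha : a ≠ 0) (e : ℕ)
    (b : ℤ) (hb : b.natAbs = p ^ e) (z : ℕ → ℚ) (n : ℕ) (hn : 0 < n) (hz : ∀ i, z i ≠ 0)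
    (hy : ∀ i, a * z i ^ d + b ≠ 0) (hs : ∀ i, z (i+1) = z i / (a * z i ^ d + b))
    (hper : ∀ i, z (i+n) = z i) : ∀ i, |a * z i ^ d + b| = 1 := by
  have hw0 : ∀ i, a * z i ^ d ≠ 0 := fun i => mul_ne_zero ha (pow_ne_zero _ (hz i))
  have hws : ∀ i, a * z (i+1) ^ d = a * z i ^ d / (a * z i ^ d + b) ^ d := by
    intro i
    rw [hs, div_pow, mul_div_assoc]
  have hq : ∀ q : ℕ, q.Prime → (q ≠ p ∨ e = 0) → ∀ i, padicNorm q (a * z i ^ d + b) = 1 := by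
    intro q hq hqp
    have := Fact.mk hq
    have hbq := norm_b p hp e b hb q hq hqp
    refine ratio_one (fun i => padicNorm q (z i)) _ n hn (fun i => norm_pos q _ (hz i))
      (fun i => norm_pos q _ (hy i)) ?_ ?_ ?_
    · intro i
      rw [← padicNorm.mul, hs, div_mul_cancel₀ _ (hy i)]
    · intro i; simp only [hper]
    · intro i hi j hij
      have hl := norm_large_of_add q _ _ hbq hi
      have hsm : ∀ k, padicNorm q (a * z (i+1+k) ^ d) < 1 := by
        intro k
        induction k with
        | zero =>
          simp only [add_zero]
          rw [hws, padicNorm.div, norm_pow, norm_add_large q _ _ hbq hl]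
          rw [div_lt_one (by positivity)]
          exact lt_self_pow₀ hl (by omega)
        | succ k ih =>
          have : i + 1 + (k+1) = (i+1+k)+1 := by ring
          rw [this, hws, padicNorm.div, norm_pow, norm_add_small q _ _ hbq ih]
          simpa using ih
      obtain ⟨k, rfl⟩ : ∃ k, j = i+1+k := ⟨j - (i+1), by omega⟩
      exact (norm_add_small q _ _ hbq (hsm k)).ge
  by_cases he : e = 0
  · intro i
    exact abs_one_of_norms _ (hy i) (fun q hqp => hq q hqp (Or.inr he) i)
  have htri : ∀ i, |a * z i ^ d + b| ≤ 1/2 ∨ |a * z i ^ d + b| = 1 ∨ 2 ≤ |a * z i ^ d + b| :=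
    fun i => zpow_trich p hp _ (abs_zpow p hp _ (hy i) (fun q h1 h2 => hq q h1 (Or.inl h2) i))
  have hB : (2:ℚ) ≤ |(b:ℚ)| := by
    rw [abs_b p e b hb]
    have hp2 : (2:ℚ) ≤ p := by exact_mod_cast hp.two_le
    exact hp2.trans (le_self_pow₀ (by linarith) he)
  refine ratio_one (fun i => |z i|) _ n hn (fun i => abs_pos.2 (hz i))
    (fun i => abs_pos.2 (hy i)) ?_ ?_ ?_
  · intro i
    rw [← abs_mul, hs, div_mul_cancel₀ _ (hy i)]
  · intro i; simp only [hper]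
  · intro i hi j hij
    have hstep : ∀ k, 1 < |a * z k ^ d + b| → 1 < |a * z (k+1) ^ d + b| := by
      intro k hk
      have h2 : 2 ≤ |a * z k ^ d + b| := by
        rcases htri k with h | h | h <;> linarith
      have h3 : |a * z (k+1) ^ d| * |a * z k ^ d + b| ^ d = |a * z k ^ d| := by
        rw [← abs_pow, ← abs_mul, hws, div_mul_cancel₀ _ (pow_ne_zero _ (hy k))]
      have h4 : |a * z k ^ d| ≤ |a * z k ^ d + b| + |(b:ℚ)| := by
        have := abs_sub (a * z k ^ d + b) (b:ℚ)
        simpa using this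
      have h5 : |(b:ℚ)| ≤ |a * z (k+1) ^ d + b| + |a * z (k+1) ^ d| := by
        have := abs_sub (a * z (k+1) ^ d + b) (a * z (k+1) ^ d)
        simpa using this
      generalize |a * z k ^ d + b| = c at *
      generalize |a * z (k+1) ^ d + b| = c' at *
      generalize |a * z k ^ d| = w at *
      have hw' : 0 ≤ |a * z (k+1) ^ d| := abs_nonneg _
      generalize |a * z (k+1) ^ d| = w' at *
      generalize |(b:ℚ)| = B at *
      have h6 : c^3 ≤ c^d := pow_le_pow_right₀ hk.le hd
      have h7 : w' * c^3 ≤ c + B := by nlinarith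
      have h8' : 4 ≤ c^2 := by nlinarith
      have h8 : 4 * c ≤ c^3 := by nlinarith
      have h9 : w' * 4 * c ≤ c + B := by nlinarith
      have h10 : w' * 4 ≤ 1 + B / 2 := by
        by_contra hcon
        push Not at hcon
        nlinarith
      linarith
    obtain ⟨k, rfl⟩ : ∃ k, j = i+k := ⟨j - i, by omega⟩
    clear hij
    have : ∀ k, 1 < |a * z (i+k) ^ d + b| := by
      intro k
      induction k with
      | zero => exact hi
      | succ k ih => exact hstep _ ih
    exact (this k).le

/-- Poles have no preimage. -/
lemma pole_no_preimage (p : ℕ) (hp : p.Prime) (d : ℕ) (hd : 3 ≤ d) (e : ℕ)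
    (b : ℤ) (hb : b.natAbs = p ^ e) (w : ℚ) (hw : w ≠ 0) (hy : w + b ≠ 0)
    (h : w = -b * (w + b) ^ d) : False := by
  have hc := zpow_trich p hp _ (abs_zpow p hp (w+b) hy (by
    intro q hq hqp
    have := Fact.mk hq
    have hbq := norm_b p hp e b hb q hq (Or.inl hqp)
    have hn : padicNorm q w = padicNorm q (w+b) ^ d := by
      conv_lhs => rw [h]
      rw [padicNorm.mul, padicNorm.neg, hbq, norm_pow, one_mul]
    rcases lt_trichotomy (padicNorm q w) 1 with h1 | h1 | h1
    · exact norm_add_small q _ _ hbq h1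
    · rw [h1] at hn
      exact (pow_eq_one_iff_of_nonneg (padicNorm.nonneg _) (by omega)).1 hn.symm
    · rw [norm_add_large q _ _ hbq h1] at hn
      have := lt_self_pow₀ h1 (show 1 < d by omega)
      linarith))
  have hB1 : (1:ℚ) ≤ |(b:ℚ)| := by
    rw [abs_b p e b hb]
    exact one_le_pow₀ (by exact_mod_cast hp.one_lt.le)
  have h3 : |w| = |(b:ℚ)| * |w + b| ^ d := by
    conv_lhs => rw [h]
    rw [abs_mul, abs_neg, abs_pow]
  have h4 : |w| ≤ |w + b| + |(b:ℚ)| := by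
    have := abs_sub (w + b) (b:ℚ)
    simpa using this
  have h5 : |(b:ℚ)| ≤ |w + b| + |w| := by
    have := abs_sub (w + b) w
    simpa using this
  rcases hc with hc | hc | hc
  · have h0 : 0 ≤ |w + b| := abs_nonneg _
    have : |w + b|^d ≤ |w + b|^2 := pow_le_pow_of_le_one h0 (by linarith) (by omega)
    have : |w + b|^d ≤ 1/4 := by nlinarith
    nlinarith
  · rcases (abs_eq (by norm_num)).1 hc with h1 | h1
    · rw [h1] at h
      simp at h
      rw [h] at h1
      simp at h1
    · rcases Nat.even_or_odd d with hdd | hdd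
      · rw [h1, hdd.neg_one_pow] at h
        simp at h
        rw [h] at h1
        simp at h1
      · rw [h1, hdd.neg_one_pow] at h
        simp at h
        rw [h] at h1
        have : b + b = -1 := by exact_mod_cast h1
        omega
  · have h6 : |w + b|^3 ≤ |w + b|^d := pow_le_pow_right₀ (by linarith) hd
    generalize |w + b| = c at *
    have h8' : 4 ≤ c^2 := by nlinarith
    have h8 : 4 * c ≤ c^3 := by nlinarith
    nlinarith

/-- Preimages of the unit locus. -/
lemma unit_preimage (p : ℕ) (hp : p.Prime) (d : ℕ) (hd : 3 ≤ d) (e : ℕ)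
    (b : ℤ) (hb : b.natAbs = p ^ e) (ε : ℤ) (hε : ε = 1 ∨ ε = -1) (hne : ε - b ≠ 0)
    (y : ℚ) (hy : y ≠ 0) (h : y - b = (ε - b) * y ^ d) : y = ε := by
  have hb0 : b ≠ 0 := by
    intro h0; rw [h0] at hb; simp at hb
    have := pow_ne_zero e hp.ne_zero
    omega
  obtain ⟨D, rfl⟩ : ∃ D, d = D + 1 := ⟨d - 1, by omega⟩
  obtain ⟨N, v, hv, hcop, hyN⟩ : ∃ N v : ℤ, 0 < v ∧ IsCoprime N v ∧ y = (N:ℚ) / v :=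
    ⟨y.num, y.den, by exact_mod_cast y.den_pos,
      by rw [Int.isCoprime_iff_nat_coprime]; simpa using y.reduced,
      by exact_mod_cast (Rat.num_div_den y).symm⟩
  have hN0 : N ≠ 0 := by rintro rfl; simp at hyN; exact hy hyN
  have hvq : (v:ℚ) ≠ 0 := by exact_mod_cast hv.ne'
  have E : v ^ D * (N - b * v) = (ε - b) * N ^ (D+1) := by
    have : ((v:ℚ) ^ D * (N - b * v)) = (ε - b) * N ^ (D+1) := by
      rw [hyN, div_pow] at h
      field_simp at h
      rw [pow_succ] at h
      have hh := mul_right_cancel₀ hvq (show ((v:ℚ) ^ D * (N - b * v)) * v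
        = ((ε - b) * N ^ (D+1)) * v by linear_combination h)
      exact hh
    exact_mod_cast this
  have hdv : N ^ (D+1) ∣ N - b * v := by
    have : N ^ (D+1) ∣ v ^ D * (N - b * v) := ⟨ε - b, by rw [E]; ring⟩
    exact (IsCoprime.pow hcop).dvd_of_dvd_mul_left this
  have hvd : v ^ D ∣ ε - b := by
    have : v ^ D ∣ (ε - b) * N ^ (D+1) := ⟨N - b * v, by rw [E]⟩
    exact (IsCoprime.pow hcop.symm).dvd_of_dvd_mul_right this
  have hNb : N ∣ b := by
    have h1 : N ∣ N - b * v := (dvd_pow_self N (by omega)).trans hdv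
    have h2 : N ∣ b * v := by
      have := dvd_sub (dvd_refl N) h1
      simpa using this
    exact hcop.dvd_of_dvd_mul_right h2
  obtain ⟨M, hM⟩ := hNb
  have hMcop : IsCoprime M N := by
    obtain ⟨k, hk⟩ := hdv
    have : N * (M * v + k * N ^ D) = N * 1 := by
      rw [hM] at hk
      linear_combination -hk
    have h2 := mul_left_cancel₀ hN0 this
    obtain ⟨D', rfl⟩ : ∃ D', D = D' + 1 := ⟨D - 1, by omega⟩
    exact ⟨v, k * N ^ D', by rw [← h2]; ring⟩
  have hB1 : 1 ≤ |b| := Int.one_le_abs hb0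
  have hεa : |ε| = 1 := by rcases hε with rfl | rfl <;> simp
  have hvD : v ^ D ≤ |b| + 1 := by
    have := Int.le_of_dvd (abs_pos.2 hne) ((dvd_abs _ _).2 hvd)
    have h2 := abs_sub ε b
    linarith
  have hv2 : v ^ 2 ≤ v ^ D := pow_le_pow_right₀ (by omega) (by omega)
  have hunit : |N| = 1 ∨ |M| = 1 := by
    have hMN : M.natAbs * N.natAbs = p ^ e := by rw [← Int.natAbs_mul, mul_comm, ← hM, hb]
    have hc : Nat.Coprime M.natAbs N.natAbs := by rwa [← Int.isCoprime_iff_nat_coprime]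
    obtain ⟨i, hi, hi'⟩ := (Nat.dvd_prime_pow hp).1 (Dvd.intro _ hMN)
    obtain ⟨j, hj, hj'⟩ := (Nat.dvd_prime_pow hp).1 (Dvd.intro_left _ hMN)
    rw [Int.abs_eq_natAbs, Int.abs_eq_natAbs]
    by_cases i0 : i = 0
    · right; rw [hi', i0]; simp
    by_cases j0 : j = 0
    · left; rw [hj', j0]; simp
    exfalso
    rw [hi', hj'] at hc
    exact hp.one_lt.ne' (Nat.eq_one_of_dvd_coprimes hc (dvd_pow_self p i0) (dvd_pow_self p j0))
  by_cases hN1 : |N| = 1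
  · have hle : v ^ D * |N - b * v| ≤ |b| + 1 := by
      have h1 : |v ^ D * (N - b * v)| = |(ε - b) * N ^ (D+1)| := by rw [E]
      rw [abs_mul, abs_mul, abs_pow N, hN1, one_pow, mul_one, abs_of_pos (pow_pos hv D)] at h1
      have h2 := abs_sub ε b
      linarith
    have hge : |b| * v - 1 ≤ |N - b * v| := by
      have := abs_sub_abs_le_abs_sub (b * v) N
      rw [abs_mul, abs_of_pos hv, hN1, abs_sub_comm] at this
      exact this
    have hv1 : v = 1 := by
      by_contra hv1
      have hv3 : 2 ≤ v := by omega
      have h4 : 4 ≤ v ^ D := by nlinarith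
      have h5 : 2 * |b| - 1 ≤ |N - b * v| := by nlinarith
      nlinarith
    subst hv1
    simp at E hyN
    rw [hyN]
    have hN : N = ε ∨ N = -ε := by
      rcases (abs_eq (by norm_num)).1 hN1 with h1 | h1 <;> rcases hε with h2 | h2 <;> omega
    rcases hN with hN | hN
    · exact_mod_cast hN
    · exfalso
      have hpw : N ^ (D+1) = 1 ∨ N ^ (D+1) = -1 := by
        rcases (abs_eq (by norm_num)).1 hN1 with h1 | h1
        · left; rw [h1]; simp
        · rw [h1]; exact neg_one_pow_eq_or ℤ _
      rcases hpw with h1 | h1 <;> rw [h1] at E <;> rcases hε with h2 | h2 <;> omega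
  · have hM1 : |M| = 1 := hunit.resolve_left hN1
    exfalso
    have hNB : |N| = |b| := by rw [hM, abs_mul, hM1, mul_one]
    have hB2 : 2 ≤ |b| := by omega
    have hdiv : N ^ D ∣ 1 - M * v := by
      obtain ⟨k, hk⟩ := hdv
      refine ⟨k, mul_left_cancel₀ hN0 ?_⟩
      rw [hM] at hk
      linear_combination hk
    have hnz : 1 - M * v ≠ 0 := by
      intro h0
      have : N - b * v = 0 := by rw [hM]; linear_combination N * h0
      rw [this, mul_zero] at E
      exact (mul_ne_zero hne (pow_ne_zero _ hN0)) E.symm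
    have h1 : |b| ^ D ≤ v + 1 := by
      have := Int.le_of_dvd (abs_pos.2 hnz) ((dvd_abs _ _).2 ((abs_dvd _ _).2 hdiv))
      rw [abs_pow, hNB] at this
      have h2 := abs_sub 1 (M * v)
      rw [abs_mul, hM1, abs_of_pos hv] at h2
      simp at h2
      linarith
    have h2 : |b| ^ 2 ≤ |b| ^ D := pow_le_pow_right₀ (by omega) (by omega)
    have h3 : v < |b| := by nlinarith
    nlinarith

lemma not_both (d : ℕ) (hd : Even d) (a : ℚ) (ha : a ≠ 0) (b : ℤ) (x y : ℚ) (hx : x ≠ 0)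
    (hy : y ≠ 0) (h1 : a * x ^ d + b = 1) (h2 : a * y ^ d + b = -1) : False := by
  obtain ⟨m, rfl⟩ := hd
  have hsq : (a * (x * y)^m) * (a * (x * y)^m) = ((b * b - 1 : ℤ) : ℚ) := by
    have e1 : a * x ^ (m+m) = 1 - b := by linarith
    have e2 : a * y ^ (m+m) = -1 - b := by linarith
    have : (a * (x * y)^m) * (a * (x * y)^m) = (a * x ^ (m+m)) * (a * y ^ (m+m)) := by ring
    rw [this, e1, e2]; push_cast; ring
  have hne : (a * (x * y)^m) ≠ 0 := mul_ne_zero ha (pow_ne_zero _ (mul_ne_zero hx hy))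
  have hS : IsSquare ((b * b - 1 : ℤ) : ℚ) := ⟨_, hsq.symm⟩
  rw [Rat.isSquare_intCast_iff] at hS
  obtain ⟨r, hr⟩ := hS
  have hr0 : r ≠ 0 := by
    rintro rfl
    rw [hr] at hsq
    simp at hsq
    rcases hsq with h | h
    · exact ha h
    · rcases h.1 with h | h
      · exact hx h
      · exact hy h
  have hk : (|b| - |r|) * (|b| + |r|) = 1 := by
    have := abs_mul_abs_self b
    have := abs_mul_abs_self r
    nlinarith
  have h3 : 1 ≤ |r| := Int.one_le_abs hr0
  have h4 := Int.eq_one_or_neg_one_of_mul_eq_one hk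
  have h5 := abs_nonneg b
  rcases h4 with h4 | h4 <;> rw [h4] at hk <;> omega

/-- the solutions of `a z^d + b = k` -/
lemma sol_card (d : ℕ) (hd : 3 ≤ d) (a b k : ℚ) (ha : a ≠ 0) :
    ∃ r : ℚ, ∀ z : ℚ, z ≠ 0 → a * z ^ d + b = k → z = r ∨ (z = -r ∧ Even d) := by
  by_cases hex : ∃ r : ℚ, r ≠ 0 ∧ a * r ^ d + b = k
  · obtain ⟨r, hr0, hr⟩ := hex
    refine ⟨r, fun z hz h => ?_⟩
    have h1 : z ^ d = r ^ d := mul_left_cancel₀ ha (by linarith)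
    rcases Nat.even_or_odd d with hdd | hdd
    · have h2 : |z| = |r| := by
        have : |z| ^ d = |r| ^ d := by rw [← abs_pow, ← abs_pow, h1]
        exact (pow_left_inj₀ (abs_nonneg _) (abs_nonneg _) (by omega)).1 this
      rcases abs_eq_abs.1 h2 with h | h
      · exact Or.inl h
      · exact Or.inr ⟨h, hdd⟩
    · exact Or.inl (hdd.strictMono_pow.injective h1)
  · exact ⟨0, fun z hz h => (hex ⟨z, hz, h⟩).elim⟩

/-- The locus which contains all preperiodic points. -/
def Good (d : ℕ) (a b : ℚ) : Option ℚ → Prop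
  | none => True
  | some z => z = 0 ∨ a * z ^ d + b = 0 ∨ a * z ^ d + b = 1 ∨ a * z ^ d + b = -1

lemma good_pull (p : ℕ) (hp : p.Prime) (d : ℕ) (hd : 3 ≤ d) (a : ℚ) (ha : a ≠ 0) (e : ℕ)
    (b : ℤ) (hb : b.natAbs = p ^ e) (P : Option ℚ) (h : Good d a b (psi d a b P)) :
    Good d a b P := by
  cases P with
  | none => trivial
  | some z =>
    by_cases hz : z = 0
    · exact Or.inl hz
    by_cases hy : a * z ^ d + b = 0
    · exact Or.inr (Or.inl hy)
    have hw : a * z ^ d ≠ 0 := mul_ne_zero ha (pow_ne_zero _ hz)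
    rw [psi, if_neg hy] at h
    have hmul : a * (z / (a * z ^ d + b)) ^ d * (a * z ^ d + b) ^ d = a * z ^ d := by
      rw [div_pow, mul_assoc, div_mul_cancel₀ _ (pow_ne_zero _ hy)]
    have hw' : a * (z / (a * z ^ d + b)) ^ d ≠ 0 :=
      mul_ne_zero ha (pow_ne_zero _ (div_ne_zero hz hy))
    rcases h with h | h | h | h
    · exact absurd h (div_ne_zero hz hy)
    · exfalso
      have h1 : a * (z / (a * z ^ d + b)) ^ d = -b := by linarith
      rw [h1] at hmul
      exact pole_no_preimage p hp d hd e b hb _ hw hy hmul.symm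
    · have h1 : a * (z / (a * z ^ d + b)) ^ d = ((1:ℤ):ℚ) - b := by push_cast; linarith
      rw [h1] at hmul hw'
      have := unit_preimage p hp d hd e b hb 1 (Or.inl rfl) (by exact_mod_cast hw')
        (a * z ^ d + b) hy (by rw [hmul]; ring)
      exact Or.inr (Or.inr (Or.inl (by simpa using this)))
    · have h1 : a * (z / (a * z ^ d + b)) ^ d = ((-1:ℤ):ℚ) - b := by push_cast; linarith
      rw [h1] at hmul hw'
      have := unit_preimage p hp d hd e b hb (-1) (Or.inr rfl) (by exact_mod_cast hw')
        (a * z ^ d + b) hy (by rw [hmul]; ring)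
      exact Or.inr (Or.inr (Or.inr (by simpa using this)))

lemma good_periodic (p : ℕ) (hp : p.Prime) (d : ℕ) (hd : 3 ≤ d) (a : ℚ) (ha : a ≠ 0) (e : ℕ)
    (b : ℤ) (hb : b.natAbs = p ^ e) (P : Option ℚ) (n : ℕ) (hn : 0 < n)
    (h : (psi d a b)^[n] P = P) : Good d a b P := by
  by_cases hP : P = none ∨ P = some 0
  · rcases hP with rfl | rfl
    · trivial
    · exact Or.inl rfl
  have hinv : ∀ Q, (Q = none ∨ Q = some 0) → ∀ k, (psi d a b)^[k] Q = none ∨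
      (psi d a b)^[k] Q = some 0 := by
    intro Q hQ k
    induction k with
    | zero => exact hQ
    | succ k ih =>
      rw [Function.iterate_succ_apply']
      rcases ih with h | h <;> rw [h]
      · exact Or.inr rfl
      · rw [psi]; split_ifs
        · exact Or.inl rfl
        · right; simp
  have hnot : ∀ i, ¬ ((psi d a b)^[i] P = none ∨ (psi d a b)^[i] P = some 0) := by
    intro i hi
    have h1 := hinv _ hi (i * n - i)
    rw [← Function.iterate_add_apply, Nat.sub_add_cancel (Nat.le_mul_of_pos_right i hn)] at h1
    have h2 : (psi d a b)^[i * n] P = P := by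
      have : Function.IsPeriodicPt (psi d a b) n P := h
      exact this.const_mul i
    rw [h2] at h1
    exact hP h1
  have hex : ∀ i, ∃ z : ℚ, (psi d a b)^[i] P = some z := by
    intro i
    have := hnot i
    cases hc : (psi d a b)^[i] P with
    | none => exact absurd (Or.inl hc) this
    | some z => exact ⟨z, rfl⟩
  choose z hz using hex
  have hz0 : ∀ i, z i ≠ 0 := by
    intro i h0
    exact hnot i (Or.inr (by rw [hz, h0]))
  have hst : ∀ i, psi d a b (some (z i)) = some (z (i+1)) := by
    intro i
    rw [← hz, ← hz, Function.iterate_succ_apply']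
  have hy : ∀ i, a * z i ^ d + b ≠ 0 := by
    intro i h0
    have := hst i
    rw [psi, if_pos h0] at this
    cases this
  have hs : ∀ i, z (i+1) = z i / (a * z i ^ d + b) := by
    intro i
    have := hst i
    rw [psi, if_neg (hy i)] at this
    exact (Option.some.inj this).symm
  have hper : ∀ i, z (i+n) = z i := by
    intro i
    apply Option.some.inj
    rw [← hz, ← hz, Function.iterate_add_apply, h]
  have := periodic_unit p hp d hd a ha e b hb z n hn hz0 hy hs hper 0
  have hP0 : P = some (z 0) := hz 0
  rw [hP0]
  exact Or.inr (Or.inr ((abs_eq (by norm_num)).1 this))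

lemma good_subset (d : ℕ) (hd : 3 ≤ d) (a : ℚ) (ha : a ≠ 0) (b : ℤ) :
    ∃ s : Finset (Option ℚ), s.card ≤ 6 ∧ ∀ P, Good d a b P → P ∈ s := by
  classical
  obtain ⟨r0, h0⟩ := sol_card d hd a b 0 ha
  obtain ⟨r1, h1⟩ := sol_card d hd a b 1 ha
  obtain ⟨r2, h2⟩ := sol_card d hd a b (-1) ha
  by_cases hdd : Even d
  · by_cases hex : ∃ x : ℚ, x ≠ 0 ∧ a * x ^ d + b = 1
    · obtain ⟨x, hx, hx1⟩ := hex
      refine ⟨{none, some 0, some r0, some (-r0), some r1, some (-r1)}, Finset.card_le_six, ?_⟩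
      intro P hP
      cases P with
      | none => simp
      | some z =>
        by_cases hz : z = 0
        · simp [hz]
        rcases hP with h | h | h | h
        · exact absurd h hz
        · rcases h0 z hz h with h | h <;> simp [h]
        · rcases h1 z hz h with h | h <;> simp [h]
        · exact (not_both d hdd a ha b x z hx hz hx1 h).elim
    · refine ⟨{none, some 0, some r0, some (-r0), some r2, some (-r2)}, Finset.card_le_six, ?_⟩
      intro P hP
      cases P with
      | none => simp
      | some z =>
        by_cases hz : z = 0
        · simp [hz]
        rcases hP with h | h | h | h
        · exact absurd h hz
        · rcases h0 z hz h with h | h <;> simp [h]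
        · exact absurd ⟨z, hz, h⟩ hex
        · rcases h2 z hz h with h | h <;> simp [h]
  · refine ⟨{none, some 0, some r0, some r1, some r2}, Finset.card_le_five.trans (by norm_num), ?_⟩
    intro P hP
    cases P with
    | none => simp
    | some z =>
      by_cases hz : z = 0
      · simp [hz]
      rcases hP with h | h | h | h
      · exact absurd h hz
      · rcases h0 z hz h with h | h
        · simp [h]
        · exact absurd h.2 hdd
      · rcases h1 z hz h with h | h
        · simp [h]
        · exact absurd h.2 hdd
      · rcases h2 z hz h with h | h
        · simp [h]
        · exact absurd h.2 hdd

end PsiAux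

/-- Let `p` be a prime, `d ≥ 3`, `a` a nonzero rational, and
`b = σ·p^e` with `σ ∈ {1,−1}` and `e ≥ 0`. Then `ψ_{d,a,b}` has at most `6`
rational preperiodic points. -/
theorem preper_card_le_six_deg_ge_three
    (p : ℕ) (hp : p.Prime) (d : ℕ) (hd : 3 ≤ d) (a : ℚ) (ha : a ≠ 0)
    (σ : ℚ) (hσ : σ = 1 ∨ σ = -1) (e : ℕ) (b : ℚ) (hb : b = σ * (p : ℚ) ^ e) :
    {P : Option ℚ | ∃ m n : ℕ, m < n ∧ (psi d a b)^[m] P = (psi d a b)^[n] P}.encard ≤ 6 := by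
  obtain ⟨c, hc, hcb⟩ : ∃ c : ℤ, c.natAbs = p ^ e ∧ b = c := by
    rcases hσ with rfl | rfl
    · exact ⟨(p:ℤ)^e, by simp [Int.natAbs_pow], by rw [hb]; push_cast; ring⟩
    · exact ⟨-(p:ℤ)^e, by simp [Int.natAbs_pow], by rw [hb]; push_cast; ring⟩
  subst hcb
  obtain ⟨s, hs, hsub⟩ := PsiAux.good_subset d hd a ha c
  have hss : {P : Option ℚ | ∃ m n : ℕ, m < n ∧ (psi d a c)^[m] P = (psi d a c)^[n] P} ⊆
      (s : Set (Option ℚ)) := by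
    rintro P ⟨m, n, hmn, h⟩
    apply hsub
    have hg : PsiAux.Good d a c ((psi d a c)^[m] P) := by
      refine PsiAux.good_periodic p hp d hd a ha e c hc _ (n - m) (by omega) ?_
      rw [← Function.iterate_add_apply, Nat.sub_add_cancel hmn.le, h]
    clear h hmn
    induction m with
    | zero => exact hg
    | succ m ih =>
      rw [Function.iterate_succ_apply'] at hg
      exact ih (PsiAux.good_pull p hp d hd a ha e c hc _ hg)
  refine (Set.encard_le_encard hss).trans ?_
  rw [Set.encard_coe_eq_coe_finsetCard]
  exact_mod_cast hs
end
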